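/- Cancellation of higher order terms, Case 1 (Corollary 4.7, estimate (AG), for classical solutions). Let n ≥ 3, Ω ⊆ ℝⁿ a domain, 2 ≤ k ≤ n, f : Ω×ℝ×ℝⁿ → ℝ positive and C^{1,1}_loc, H₁ : Ω×ℝ → ℝ C^{1,1}_loc with H₁ ≥ 0, and H(x,z,ξ) := H₁(x,z)|ξ|²I. Fix concentric balls with closure(B_{2R}) ⊂ Ω, and constants M > 0 and c₀ > 0. Then there is a constant C, depending only on n, k, R, f, H₁, M and c₀, such that the following holds. Let u ∈ C³(Ω) satisfy σ_k(A_H[u]) = f(x,u,∇u)^k and λ(A_H[u]) ∈ Γ_k^+ on Ω, with sup_{B_{2R}}(|u|+|∇u|) ≤ M; let C₁ ∈ [0,M] satisfy Δu + C₁ ≥ 1 and |∇²u| ≤ Δu + C₁ pointwise on B_{2R}; let q > 1, ρ ∈ (0,R/3], 0 < |h| < ρ, and let η be a smooth function supported in B_{R+2ρ} with 0 ≤ η ≤ 1, η ≡ 1 on B_{R+ρ}, |∇η| ≤ c₀/ρ and |∇²η| ≤ c₀/ρ². Set ṽ := v_h + C₁. Then ∫_{B_{R+2ρ}} η (ṽ⁺)^{q−1}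 Σ_j (Σ_i ∂_i(F[u]^{ij})) ∂_j ṽ + Σ_{l=1}^n ∫_{B_{R+2ρ}} η (ṽ⁺)^{q−1} Σ_{i,j} F[u]^{ij} Δ_{ll}^h((H[u])_{ij}) ≥ −(C/ρ)·( ∫_{B_{R+2ρ}}(ṽ⁺)^{q+k−1} + ∫_{B_{R+3ρ}}(Δu+C₁)^{q+k−1} ). -/

import Mathlib

open MeasureTheory Metric Set Matrix

noncomputable section

/-- The `k`-th elementary symmetric polynomial of the eigenvalues of an `n × n` real
matrix, defined via the coefficients of the characteristic polynomial. -/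
def esymmMat {n : ℕ} (k : ℕ) (A : Matrix (Fin n) (Fin n) ℝ) : ℝ :=
  (-1 : ℝ) ^ k * A.charpoly.coeff (n - k)

/-- `λ(A) ∈ Γ_k^+`, i.e. `σ_j(A) > 0` for all `1 ≤ j ≤ k`. -/
def GammaPlus {n : ℕ} (k : ℕ) (A : Matrix (Fin n) (Fin n) ℝ) : Prop :=
  ∀ j : ℕ, 1 ≤ j → j ≤ k → 0 < esymmMat j A

/-- The Newton tensors `T_0(A) = I`, `T_j(A) = σ_j(A) I - T_{j-1}(A) A`. -/
def newtonT {n : ℕ} : ℕ → Matrix (Fin n) (Fin n) ℝ → Matrix (Fin n) (Fin n) ℝ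
  | 0, _ => 1
  | (j + 1), A => esymmMat (j + 1) A • (1 : Matrix (Fin n) (Fin n) ℝ) - newtonT j A * A

/-- `i`-th partial derivative. -/
def pd {n : ℕ} (i : Fin n) (w : (Fin n → ℝ) → ℝ) (x : Fin n → ℝ) : ℝ :=
  fderiv ℝ w x (Pi.single i 1)

/-- Gradient as a vector. -/
def grad {n : ℕ} (w : (Fin n → ℝ) → ℝ) (x : Fin n → ℝ) : Fin n → ℝ :=
  fun i => pd i w x

/-- Hessian matrix. -/
def hess {n : ℕ} (w : (Fin n → ℝ) → ℝ) (x : Fin n → ℝ) : Matrix (Fin n) (Fin n) ℝ :=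
  Matrix.of fun i j => pd i (pd j w) x

/-- Squared Euclidean norm of a vector. -/
def normSq {n : ℕ} (ξ : Fin n → ℝ) : ℝ := ∑ i, ξ i ^ 2

/-- Euclidean norm of a vector. -/
def vnorm {n : ℕ} (ξ : Fin n → ℝ) : ℝ := Real.sqrt (∑ i, ξ i ^ 2)

/-- Operator norm of a matrix, viewed as a linear map between Euclidean spaces. -/
def matNorm {n : ℕ} (M : Matrix (Fin n) (Fin n) ℝ) : ℝ :=
  ‖LinearMap.toContinuousLinearMap (Matrix.toEuclideanLin M)‖

/-- Laplacian. -/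
def lapl {n : ℕ} (w : (Fin n → ℝ) → ℝ) (x : Fin n → ℝ) : ℝ := ∑ l, pd l (pd l w) x

/-- `W^{2,p}` norm (with classical derivatives) on a set. -/
def W2pNorm {n : ℕ} (p : ℝ) (w : (Fin n → ℝ) → ℝ) (B : Set (Fin n → ℝ)) : ℝ :=
  (∫ x in B, (|w x| ^ p + vnorm (grad w x) ^ p + matNorm (hess w x) ^ p)) ^ (1 / p)

/-- `C^{1,1}_loc` on a set: continuously differentiable with locally Lipschitz
first derivatives. -/
def C11On {E F : Type*} [NormedAddCommGroup E] [NormedSpace ℝ E]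
    [NormedAddCommGroup F] [NormedSpace ℝ F] (f : E → F) (s : Set E) : Prop :=
  ContDiffOn ℝ 1 f s ∧
    ∀ x ∈ s, ∃ (K : NNReal) (t : Set E), t ∈ nhdsWithin x s ∧
      LipschitzOnWith K (fderivWithin ℝ f s) t

/-- First order difference quotient `∇_l^h`. -/
def dq {n : ℕ} (l : Fin n) (h : ℝ) (w : (Fin n → ℝ) → ℝ) (x : Fin n → ℝ) : ℝ :=
  (w (x + h • (Pi.single l 1 : Fin n → ℝ)) - w x) / h

/-- Second order difference quotient `Δ_{ll}^h`. -/
def ddq {n : ℕ} (l : Fin n) (h : ℝ) (w : (Fin n → ℝ) → ℝ) (x : Fin n → ℝ) : ℝ :=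
  (w (x + h • (Pi.single l 1 : Fin n → ℝ)) - 2 * w x + w (x - h • (Pi.single l 1 : Fin n → ℝ))) / h ^ 2

/-- `L^s` seminorm (as an extended real number) of a function on a set. -/
def lpN {n : ℕ} (s : ℝ) (w : (Fin n → ℝ) → ℝ) (S : Set (Fin n → ℝ)) : ENNReal :=
  (∫⁻ x in S, ENNReal.ofReal (|w x| ^ s)) ^ (1 / s)

end

/-!
Write `φ = H₁(x,u)|∇u|²` and `T_m`, `σ_m` for the Newton tensors and elementary symmetric functions
of `∇²u - φI`. The Newton tensors of a Hessian are divergence free, so the divergence of `T_{k-1}`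
only sees `φ`: it is `-(n-k+1) T_{k-2}∇φ`. The second-order part of `∇φ` is `2H₁ ∇²u∇u`, and
`T_{k-2}(∇²u - φI) = σ_{k-1}I - T_{k-1}` turns it into the bad term `-2(n-k+1)H₁σ_{k-1}∇u` plus a
flux built from fields `T_m g` whose divergence is `O((Δu + C₁)^{k-1})`. On the other side
`tr T_{k-1} = (n-k+1)σ_{k-1}`, and since `H₁ ≥ 0` the squares of first differences may be dropped
from `Δ_{ll}^h φ`, which leaves at least `2H₁ Σ_i ∂_iu Δ_{ll}^h ∂_iu` up to lower order. Summed over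
`l`, this cancels the bad term tested with `∇ṽ`, because `∂_iṽ = Σ_l Δ_{ll}^h ∂_iu`.

The flux is integrated by parts against `∇(ṽ⁺)^q / q`; its coefficients are only Lipschitz, `H₁`
being only `C^{1,1}`. The derivative of the cutoff costs the factor `1/ρ`. The lower order terms are
averages of powers of `Δu + C₁` over segments, separated from `(ṽ⁺)^{q-1}` by Young's inequality.
-/

open Asymptotics Filter
open scoped Topology

/-! ### Elementary symmetric functions and Newton tensors -/

section AdjugateCharmatrix
variable {ι R : Type*} [Fintype ι] [DecidableEq ι] [CommRing R]

lemma coeff_adjugate_charmatrix_succ (A : Matrix ι ι R) (d : ℕ) :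
    (matPolyEquiv (adjugate (charmatrix A))).coeff d =
      (matPolyEquiv (adjugate (charmatrix A))).coeff (d + 1) * A +
        A.charpoly.coeff (d + 1) • (1 : Matrix ι ι R) := by
  have h := congrArg (fun P => (matPolyEquiv P).coeff (d + 1)) (adjugate_mul (charmatrix A))
  simp only [map_mul, matPolyEquiv_charmatrix, Polynomial.coeff_mul_X_sub_C] at h
  rw [← charpoly, matPolyEquiv_smul_one, Polynomial.coeff_map, Algebra.algebraMap_eq_smul_one]
    at h
  rw [← h, add_sub_cancel]

lemma coeff_adjugate_charmatrix_of_card_le (A : Matrix ι ι R) {d : ℕ} (hd : Fintype.card ι ≤ d) :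
    (matPolyEquiv (adjugate (charmatrix A))).coeff d = 0 := by
  nontriviality R
  nontriviality Matrix ι ι R
  by_cases hB : matPolyEquiv (adjugate (charmatrix A)) = 0
  · simp [hB]
  have hmul : matPolyEquiv (adjugate (charmatrix A)) * (Polynomial.X - Polynomial.C A) =
      A.charpoly.map (algebraMap R (Matrix ι ι R)) := by
    rw [← matPolyEquiv_charmatrix, ← map_mul, adjugate_mul, ← charpoly, matPolyEquiv_smul_one]
  have hdeg := (Polynomial.monic_X_sub_C A).natDegree_mul' hB
  rw [(Polynomial.monic_X_sub_C A).natDegree_mul_comm, hmul, Polynomial.natDegree_X_sub_C] at hdeg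
  have hle := (A.charpoly.natDegree_map_le (f := algebraMap R (Matrix ι ι R))).trans
    (charpoly_natDegree_eq_dim A).le
  exact Polynomial.coeff_eq_zero_of_natDegree_lt (by omega)

lemma charpoly_add_smul_single (A : Matrix ι ι R) (i j : ι) (t : R) :
    (A + t • Matrix.single i j 1).charpoly =
      A.charpoly - Polynomial.C t * adjugate (charmatrix A) j i := by
  have h : charmatrix (A + t • Matrix.single i j 1) =
      (charmatrix A).updateRow i (charmatrix A i + (-Polynomial.C t) • Pi.single j 1) := by
    ext1 a b
    by_cases ha : a = i
    · subst ha
      by_cases hb : b = j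
      · subst hb
        simp [charmatrix_apply]; ring
      · simp [charmatrix_apply, hb, Ne.symm hb]
    · simp [charmatrix_apply, Matrix.updateRow_apply, ha, Ne.symm ha]
  rw [charpoly, h, det_updateRow_add, det_updateRow_smul, updateRow_eq_self, adjugate_apply,
    charpoly]
  ring

end AdjugateCharmatrix

section MvPolynomialEval
variable {σ α : Type*}

lemma isBigO_eval_of_isHomogeneous {l : Filter α} {p : MvPolynomial σ ℝ} {m : ℕ}
    (hp : p.IsHomogeneous m) {a : α → σ → ℝ} {g : α → ℝ} (ha : ∀ i, (fun s => a s i) =O[l] g) :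
    (fun s => MvPolynomial.eval (a s) p) =O[l] fun s => g s ^ m := by
  simp only [MvPolynomial.eval_eq]
  refine IsBigO.fun_sum fun d hd => ?_
  refine IsBigO.const_mul_left ?_ (p.coeff d)
  rw [hp.degree_eq_sum_deg_support hd]
  simp only [← Finset.prod_pow_eq_pow_sum]
  exact IsBigO.finsetProd fun i _ => (ha i).pow (d i)

lemma eval_smul_of_isHomogeneous {p : MvPolynomial σ ℝ} {m : ℕ} (hp : p.IsHomogeneous m)
    (t : ℝ) (a : σ → ℝ) :
    MvPolynomial.eval (t • a) p = t ^ m * MvPolynomial.eval a p := by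
  simp only [MvPolynomial.eval_eq, Finset.mul_sum]
  refine Finset.sum_congr rfl fun d hd => ?_
  rw [hp.degree_eq_sum_deg_support hd]
  simp only [Pi.smul_apply, smul_eq_mul, mul_pow, Finset.prod_mul_distrib,
    Finset.prod_pow_eq_pow_sum]
  ring

end MvPolynomialEval

section NewtonTensor
variable {n : ℕ} {E : Type*} [NormedAddCommGroup E] [NormedSpace ℝ E]

@[simp]
lemma esymmMat_zero (A : Matrix (Fin n) (Fin n) ℝ) : esymmMat 0 A = 1 := by
  simpa [esymmMat, Polynomial.Monic, Polynomial.leadingCoeff] using charpoly_monic A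

lemma coeff_adjugate_charmatrix_eq_newtonT (A : Matrix (Fin n) (Fin n) ℝ) {m : ℕ}
    (hm : m + 1 ≤ n) :
    (matPolyEquiv (adjugate (charmatrix A))).coeff (n - (m + 1)) = (-1 : ℝ) ^ m • newtonT m A := by
  induction m with
  | zero =>
    have h0 := esymmMat_zero A
    rw [esymmMat, pow_zero, one_mul, Nat.sub_zero] at h0
    rw [coeff_adjugate_charmatrix_succ, show n - (0 + 1) + 1 = n by omega, h0,
      coeff_adjugate_charmatrix_of_card_le A (by simp)]
    simp [newtonT]
  | succ m ih =>
    have hsign : (-1 : ℝ) ^ (m + 1) * (-1) ^ (m + 1) = 1 := by rw [← mul_pow]; simp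
    rw [coeff_adjugate_charmatrix_succ, show n - (m + 1 + 1) + 1 = n - (m + 1) by omega,
      ih (by omega), newtonT, esymmMat, smul_sub, smul_smul, ← mul_assoc, hsign, one_mul,
      smul_mul_assoc, pow_succ]
    module

lemma esymmMat_add_smul_single (A : Matrix (Fin n) (Fin n) ℝ) {m : ℕ} (hm : m + 1 ≤ n)
    (i j : Fin n) (t : ℝ) :
    esymmMat (m + 1) (A + t • Matrix.single i j 1) =
      esymmMat (m + 1) A + t * newtonT m A j i := by
  have hcoeff : (adjugate (charmatrix A) j i).coeff (n - (m + 1)) = (-1) ^ m * newtonT m A j i := by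
    rw [← matPolyEquiv_coeff_apply, coeff_adjugate_charmatrix_eq_newtonT A hm, Matrix.smul_apply,
      smul_eq_mul]
  have hsign : (-1 : ℝ) ^ m * (-1) ^ m = 1 := by rw [← mul_pow]; simp
  rw [esymmMat, charpoly_add_smul_single, Polynomial.coeff_sub, Polynomial.coeff_C_mul, hcoeff,
    esymmMat, pow_succ]
  linear_combination t * newtonT m A j i * hsign

/-- The polynomial in the matrix entries that evaluates to `esymmMat m`; it gives access to
smoothness and homogeneity. -/
noncomputable def esymmPoly (n m : ℕ) : MvPolynomial (Fin n × Fin n) ℝ :=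
  MvPolynomial.C ((-1) ^ m) * (Matrix.charpoly.univ ℝ (Fin n)).coeff (n - m)

lemma eval_esymmPoly (m : ℕ) (A : Matrix (Fin n) (Fin n) ℝ) :
    MvPolynomial.eval (fun p => A p.1 p.2) (esymmPoly n m) = esymmMat m A := by
  rw [esymmPoly, map_mul, MvPolynomial.eval_C, esymmMat]
  congr 1
  exact Matrix.charpoly.univ_coeff_eval₂Hom (Fin n) (RingHom.id ℝ) (fun p => A p.1 p.2) (n - m)

lemma isHomogeneous_esymmPoly {m : ℕ} (hm : m ≤ n) : (esymmPoly n m).IsHomogeneous m := by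
  simpa [esymmPoly] using (MvPolynomial.isHomogeneous_C (Fin n × Fin n) ((-1 : ℝ) ^ m)).mul
    (Matrix.charpoly.univ_coeff_isHomogeneous ℝ (Fin n) (n - m) m (by simp; omega))

lemma contDiff_eval_esymmPoly (m : ℕ) {N : WithTop ℕ∞} :
    ContDiff ℝ N fun a => MvPolynomial.eval a (esymmPoly n m) :=
  (AnalyticOnNhd.eval_mvPolynomial (esymmPoly n m)).contDiff

lemma isBigO_esymmMat {α : Type*} {l : Filter α} {A : α → Matrix (Fin n) (Fin n) ℝ} {g : α → ℝ}
    (hA : ∀ i j, (fun s => A s i j) =O[l] g) {m : ℕ} (hm : m ≤ n) :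
    (fun s => esymmMat m (A s)) =O[l] fun s => g s ^ m := by
  simp only [← eval_esymmPoly]
  exact isBigO_eval_of_isHomogeneous (isHomogeneous_esymmPoly hm) fun p => hA p.1 p.2

lemma isBigO_newtonT {α : Type*} {l : Filter α} {A : α → Matrix (Fin n) (Fin n) ℝ} {g : α → ℝ}
    (hA : ∀ i j, (fun s => A s i j) =O[l] g) {m : ℕ} (hm : m ≤ n) (i j : Fin n) :
    (fun s => newtonT m (A s) i j) =O[l] fun s => g s ^ m := by
  induction m generalizing i j with
  | zero =>
      simpa [newtonT] using isBigO_const_const ((1 : Matrix (Fin n) (Fin n) ℝ) i j)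
        (one_ne_zero (α := ℝ)) l
  | succ m ih =>
    simp only [newtonT, Matrix.sub_apply, Matrix.smul_apply, Matrix.mul_apply, smul_eq_mul]
    refine IsBigO.sub ?_ (IsBigO.fun_sum fun p _ => ?_)
    · simpa [mul_comm] using
        (isBigO_esymmMat hA hm).const_mul_left ((1 : Matrix (Fin n) (Fin n) ℝ) i j)
    · simpa only [pow_succ] using (ih (by omega) i p).mul (hA p j)

lemma esymmMat_smul (t : ℝ) (A : Matrix (Fin n) (Fin n) ℝ) {m : ℕ} (hm : m ≤ n) :
    esymmMat m (t • A) = t ^ m * esymmMat m A := by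
  rw [← eval_esymmPoly, ← eval_esymmPoly,
    ← eval_smul_of_isHomogeneous (isHomogeneous_esymmPoly hm)]
  rfl

lemma contDiffOn_esymmMat {N : WithTop ℕ∞} {S : Set E} (m : ℕ) {A : E → Matrix (Fin n) (Fin n) ℝ}
    (hA : ∀ i j, ContDiffOn ℝ N (fun y => A y i j) S) :
    ContDiffOn ℝ N (fun y => esymmMat m (A y)) S := by
  simp only [← eval_esymmPoly]
  exact (contDiff_eval_esymmPoly m).comp_contDiffOn (contDiffOn_pi.2 fun p => hA p.1 p.2)

lemma contDiffOn_newtonT {N : WithTop ℕ∞} {S : Set E} (m : ℕ) {A : E → Matrix (Fin n) (Fin n) ℝ}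
    (hA : ∀ i j, ContDiffOn ℝ N (fun y => A y i j) S) (i j : Fin n) :
    ContDiffOn ℝ N (fun y => newtonT m (A y) i j) S := by
  induction m generalizing i j with
  | zero => exact contDiffOn_const
  | succ m ih =>
    simp only [newtonT, Matrix.sub_apply, Matrix.smul_apply, Matrix.mul_apply, smul_eq_mul]
    exact ((contDiffOn_esymmMat _ hA).mul contDiffOn_const).sub
      (ContDiffOn.sum fun l _ => (ih i l).mul (hA l j))

lemma fderiv_eval_esymmPoly_single (A : Matrix (Fin n) (Fin n) ℝ) {m : ℕ} (hm : m + 1 ≤ n)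
    (i j : Fin n) :
    fderiv ℝ (fun a => MvPolynomial.eval a (esymmPoly n (m + 1))) (fun p => A p.1 p.2)
      (Pi.single (i, j) 1) = newtonT m A j i := by
  have hdiff := (contDiff_eval_esymmPoly (n := n) (m + 1) (N := 1)).differentiable one_ne_zero
    (fun p => A p.1 p.2)
  have hline := hdiff.hasFDerivAt.hasLineDerivAt (Pi.single (i, j) 1)
  have hentries (t : ℝ) : (fun p : Fin n × Fin n => A p.1 p.2) + t • Pi.single (i, j) 1 =
      fun p => (A + t • Matrix.single i j (1 : ℝ)) p.1 p.2 := by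
    funext p
    simp [Matrix.single_apply, Pi.single_apply, Prod.ext_iff, eq_comm]
  rw [HasLineDerivAt] at hline
  simp only [hentries, eval_esymmPoly, esymmMat_add_smul_single A hm] at hline
  exact hline.unique (by
    simpa using ((hasDerivAt_id (0 : ℝ)).mul_const (newtonT m A j i)).const_add
      (esymmMat (m + 1) A))

lemma hasFDerivAt_esymmMat {m : ℕ} (hm : m + 1 ≤ n) {A : E → Matrix (Fin n) (Fin n) ℝ} {x : E}
    {A' : Fin n → Fin n → E →L[ℝ] ℝ} (hA : ∀ i j, HasFDerivAt (fun y => A y i j) (A' i j) x) :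
    HasFDerivAt (fun y => esymmMat (m + 1) (A y))
      (∑ i, ∑ j, newtonT m (A x) j i • A' i j) x := by
  have hentries : HasFDerivAt (fun y => fun p : Fin n × Fin n => A y p.1 p.2)
      (ContinuousLinearMap.pi fun p => A' p.1 p.2) x :=
    hasFDerivAt_pi.2 fun p => hA p.1 p.2
  have hpoly := (contDiff_eval_esymmPoly (n := n) (m + 1) (N := 1)).differentiable one_ne_zero
    (fun p => A x p.1 p.2)
  have hcomp := hpoly.hasFDerivAt.comp x hentries
  simp only [Function.comp_def, eval_esymmPoly] at hcomp
  refine hcomp.congr_fderiv (ContinuousLinearMap.ext fun v => ?_)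
  rw [ContinuousLinearMap.comp_apply, pi_eq_sum_univ' (ContinuousLinearMap.pi _ v), map_sum,
    Fintype.sum_prod_type]
  simp [fderiv_eval_esymmPoly_single (A x) hm, mul_comm]

lemma commute_newtonT (A : Matrix (Fin n) (Fin n) ℝ) (m : ℕ) : Commute A (newtonT m A) := by
  induction m with
  | zero => exact Commute.one_right A
  | succ m ih =>
    exact ((Commute.one_right A).smul_right _).sub_right (ih.mul_right (Commute.refl A))

lemma isSymm_newtonT {A : Matrix (Fin n) (Fin n) ℝ} (hA : A.IsSymm) (m : ℕ) :
    (newtonT m A).IsSymm := by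
  induction m with
  | zero => exact isSymm_one
  | succ m ih =>
    refine IsSymm.sub (isSymm_one.smul _) ?_
    rw [IsSymm, transpose_mul, hA.eq, ih.eq, (commute_newtonT A m).eq]

lemma trace_newtonT_mul_self (A : Matrix (Fin n) (Fin n) ℝ) {m : ℕ} (hm : m + 1 ≤ n) :
    (newtonT m A * A).trace = (m + 1) * esymmMat (m + 1) A := by
  have hentries (i j : Fin n) : HasFDerivAt (fun t : ℝ => (t • A) i j)
      (ContinuousLinearMap.toSpanSingleton ℝ (A i j)) 1 := by
    simpa using ((hasDerivAt_id (1 : ℝ)).mul_const (A i j)).hasFDerivAt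
  have hσ := (hasFDerivAt_esymmMat hm hentries).hasDerivAt
  simp only [esymmMat_smul _ A hm] at hσ
  have hpow : HasDerivAt (fun t : ℝ => t ^ (m + 1) * esymmMat (m + 1) A)
      ((m + 1) * esymmMat (m + 1) A) 1 := by
    simpa using (hasDerivAt_pow (m + 1) (1 : ℝ)).mul_const (esymmMat (m + 1) A)
  rw [hpow.unique hσ, trace_mul_comm]
  simp [Matrix.trace, Matrix.mul_apply, mul_comm]

lemma trace_newtonT (A : Matrix (Fin n) (Fin n) ℝ) {m : ℕ} (hm : m ≤ n) :
    (newtonT m A).trace = (n - m) * esymmMat m A := by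
  cases m with
  | zero => simp [newtonT]
  | succ m =>
    rw [newtonT, trace_sub, trace_newtonT_mul_self A hm, trace_smul, trace_one, Fintype.card_fin,
      smul_eq_mul, Nat.cast_succ]
    ring

end NewtonTensor

/-! ### Partial derivatives and the divergence of the Newton tensors -/

section PartialDerivatives
variable {n : ℕ} {i : Fin n} {f g : (Fin n → ℝ) → ℝ} {x : Fin n → ℝ}

lemma pd_mul (hf : DifferentiableAt ℝ f x) (hg : DifferentiableAt ℝ g x) :
    pd i (fun y => f y * g y) x = pd i f x * g x + f x * pd i g x := by
  simp only [pd, fderiv_fun_mul hf hg, _root_.add_apply, _root_.smul_apply, smul_eq_mul]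
  ring

lemma pd_sub (hf : DifferentiableAt ℝ f x) (hg : DifferentiableAt ℝ g x) :
    pd i (fun y => f y - g y) x = pd i f x - pd i g x := by
  simp [pd, fderiv_fun_sub hf hg]

@[simp]
lemma pd_const (c : ℝ) : pd i (fun _ => c) x = 0 := by
  simp [pd]

lemma pd_const_mul (c : ℝ) (hf : DifferentiableAt ℝ f x) :
    pd i (fun y => c * f y) x = c * pd i f x := by
  simp [pd_mul (differentiableAt_const c) hf]

lemma pd_mul_const (hf : DifferentiableAt ℝ f x) (c : ℝ) :
    pd i (fun y => f y * c) x = pd i f x * c := by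
  simp [pd_mul hf (differentiableAt_const c)]

lemma pd_sum {ι : Type*} {s : Finset ι} {F : ι → (Fin n → ℝ) → ℝ}
    (hF : ∀ l ∈ s, DifferentiableAt ℝ (F l) x) :
    pd i (fun y => ∑ l ∈ s, F l y) x = ∑ l ∈ s, pd i (F l) x := by
  simp [pd, fderiv_fun_sum hF]

lemma pd_congr {S : Set (Fin n → ℝ)} (hS : IsOpen S) (hx : x ∈ S) (h : EqOn f g S) :
    pd i f x = pd i g x := by
  rw [pd, (h.eventuallyEq_of_mem (hS.mem_nhds hx)).fderiv_eq, pd]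

lemma pd_normSq_grad {u : (Fin n → ℝ) → ℝ} (hu : ∀ l, DifferentiableAt ℝ (pd l u) x) :
    pd i (fun y => normSq (grad u y)) x = ∑ l, 2 * pd l u x * pd i (pd l u) x := by
  simp only [normSq, grad, pow_two]
  rw [pd_sum fun l _ => (hu l).fun_mul (hu l)]
  refine Finset.sum_congr rfl fun l _ => ?_
  rw [pd_mul (hu l) (hu l)]
  ring

lemma pd_comp_graph {H : (Fin n → ℝ) × ℝ → ℝ} {u : (Fin n → ℝ) → ℝ}
    (hH : DifferentiableAt ℝ H (x, u x)) (hu : DifferentiableAt ℝ u x) :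
    pd i (fun y => H (y, u y)) x = fderiv ℝ H (x, u x) (Pi.single i 1, 0) +
      fderiv ℝ H (x, u x) (0, 1) * pd i u x := by
  have hcomp := HasFDerivAt.comp x (f := fun y => (y, u y)) hH.hasFDerivAt
    ((hasFDerivAt_id x).prodMk hu.hasFDerivAt)
  have hsplit : ((Pi.single i 1, pd i u x) : (Fin n → ℝ) × ℝ) =
      (Pi.single i 1, 0) + pd i u x • (0, 1) := by simp
  calc pd i (fun y => H (y, u y)) x = fderiv ℝ H (x, u x) (Pi.single i 1, pd i u x) := by
        rw [pd, show (fun y => H (y, u y)) = H ∘ fun y => (y, u y) from rfl, hcomp.fderiv]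
        rfl
    _ = _ := by rw [hsplit, map_add, map_smul, smul_eq_mul, mul_comm]

end PartialDerivatives

section SmoothOn
variable {n : ℕ} {Ω : Set (Fin n → ℝ)} {w : (Fin n → ℝ) → ℝ} {x : Fin n → ℝ}

lemma contDiffOn_pd (hΩ : IsOpen Ω) {a b : WithTop ℕ∞} (hw : ContDiffOn ℝ b w Ω) (hab : a + 1 ≤ b)
    (i : Fin n) : ContDiffOn ℝ a (pd i w) Ω :=
  (hw.fderiv_of_isOpen hΩ hab).clm_apply contDiffOn_const

lemma differentiableAt_of_contDiffOn (hΩ : IsOpen Ω) {b : WithTop ℕ∞} (hw : ContDiffOn ℝ b w Ω)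
    (hb : b ≠ 0) (hx : x ∈ Ω) : DifferentiableAt ℝ w x :=
  (hw.contDiffAt (hΩ.mem_nhds hx)).differentiableAt hb

lemma contDiffOn_normSq_grad (hΩ : IsOpen Ω) {a b : WithTop ℕ∞} (hw : ContDiffOn ℝ b w Ω)
    (hab : a + 1 ≤ b) : ContDiffOn ℝ a (fun y => normSq (grad w y)) Ω :=
  ContDiffOn.sum fun l _ => (contDiffOn_pd hΩ hw hab l).pow 2

lemma pd_comm (hΩ : IsOpen Ω) (hw : ContDiffOn ℝ 2 w Ω) (hx : x ∈ Ω) (i j : Fin n) :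
    pd i (pd j w) x = pd j (pd i w) x := by
  have hw' : DifferentiableAt ℝ (fderiv ℝ w) x :=
    ((hw.fderiv_of_isOpen hΩ (m := 1) (by norm_num)).contDiffAt
      (hΩ.mem_nhds hx)).differentiableAt one_ne_zero
  have hsnd (a b : Fin n) :
      pd a (pd b w) x = fderiv ℝ (fderiv ℝ w) x (Pi.single a 1) (Pi.single b 1) := by
    have hclm : HasFDerivAt (pd b w) _ x :=
      hw'.hasFDerivAt.clm_apply (hasFDerivAt_const (Pi.single b 1) x)
    simp [pd, hclm.fderiv]
  rw [hsnd, hsnd]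
  exact (hw.contDiffAt (hΩ.mem_nhds hx)).isSymmSndFDerivAt (by simp) _ _

lemma pd_pd_pd_swap (hΩ : IsOpen Ω) (hw : ContDiffOn ℝ 3 w Ω) (hx : x ∈ Ω) (i j l : Fin n) :
    pd j (pd l (pd i w)) x = pd i (pd l (pd j w)) x := by
  have hw2 : ContDiffOn ℝ 2 w Ω := hw.of_le (by norm_num)
  calc pd j (pd l (pd i w)) x = pd j (pd i (pd l w)) x :=
        pd_congr hΩ hx fun y hy => pd_comm hΩ hw2 hy l i
    _ = pd i (pd j (pd l w)) x := pd_comm hΩ (contDiffOn_pd hΩ hw (by norm_num) l) hx j i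
    _ = pd i (pd l (pd j w)) x := pd_congr hΩ hx fun y hy => pd_comm hΩ hw2 hy j l

end SmoothOn

section NewtonDivergence
variable {n : ℕ} {Ω : Set (Fin n → ℝ)} {x : Fin n → ℝ} {m : ℕ}

lemma pd_esymmMat {A : (Fin n → ℝ) → Matrix (Fin n) (Fin n) ℝ}
    (hA : ∀ i j, DifferentiableAt ℝ (fun y => A y i j) x) (hm : m + 1 ≤ n) (j : Fin n) :
    pd j (fun y => esymmMat (m + 1) (A y)) x =
      ∑ i, ∑ l, newtonT m (A x) i l * pd j (fun y => A y l i) x := by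
  rw [pd, (hasFDerivAt_esymmMat hm fun i j => (hA i j).hasFDerivAt).fderiv, Finset.sum_comm]
  simp [pd]

lemma sum_pd_newtonT_succ {A : (Fin n → ℝ) → Matrix (Fin n) (Fin n) ℝ} (hΩ : IsOpen Ω)
    (hA : ∀ i j, ContDiffOn ℝ 1 (fun y => A y i j) Ω) (hx : x ∈ Ω) (hm : m + 1 ≤ n) (j : Fin n) :
    ∑ i, pd i (fun y => newtonT (m + 1) (A y) i j) x =
      ∑ i, ∑ l, newtonT m (A x) i l * (pd j (fun y => A y l i) x - pd i (fun y => A y l j) x) -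
        ∑ l, (∑ i, pd i (fun y => newtonT m (A y) i l) x) * A x l j := by
  have dA (i l : Fin n) : DifferentiableAt ℝ (fun y => A y i l) x :=
    differentiableAt_of_contDiffOn hΩ (hA i l) one_ne_zero hx
  have dT (i l : Fin n) : DifferentiableAt ℝ (fun y => newtonT m (A y) i l) x :=
    differentiableAt_of_contDiffOn hΩ (contDiffOn_newtonT m hA i l) one_ne_zero hx
  have dσ : DifferentiableAt ℝ (fun y => esymmMat (m + 1) (A y)) x :=
    differentiableAt_of_contDiffOn hΩ (contDiffOn_esymmMat _ hA) one_ne_zero hx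
  have hpd (i : Fin n) : pd i (fun y => newtonT (m + 1) (A y) i j) x =
      (if i = j then pd i (fun y => esymmMat (m + 1) (A y)) x else 0) -
        ∑ l, (pd i (fun y => newtonT m (A y) i l) x * A x l j +
          newtonT m (A x) i l * pd i (fun y => A y l j) x) := by
    simp only [newtonT, Matrix.sub_apply, Matrix.smul_apply, Matrix.mul_apply, smul_eq_mul]
    rw [pd_sub (dσ.mul_const _) (DifferentiableAt.fun_sum fun l _ => (dT i l).fun_mul (dA l j)),
      pd_mul_const dσ, pd_sum fun l _ => (dT i l).fun_mul (dA l j), Matrix.one_apply, mul_ite,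
      mul_one, mul_zero]
    simp only [pd_mul (dT i _) (dA _ j)]
  simp only [hpd, Finset.sum_sub_distrib, Finset.sum_add_distrib, Finset.sum_ite_eq',
    Finset.mem_univ, if_true, pd_esymmMat dA hm j, mul_sub, Finset.sum_mul]
  rw [Finset.sum_comm (f := fun l i => pd i (fun y => newtonT m (A y) i l) x * A x l j)]
  ring

/-- The augmented Hessian `∇²u - φI` with a scalar augmenting function `φ` of position. -/
noncomputable def augHess (u φ : (Fin n → ℝ) → ℝ) (y : Fin n → ℝ) : Matrix (Fin n) (Fin n) ℝ :=
  hess u y - φ y • (1 : Matrix (Fin n) (Fin n) ℝ)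

lemma augHess_apply (u φ : (Fin n → ℝ) → ℝ) (y : Fin n → ℝ) (i j : Fin n) :
    augHess u φ y i j = pd i (pd j u) y - φ y * (1 : Matrix (Fin n) (Fin n) ℝ) i j := by
  simp [augHess, hess]

variable {u φ : (Fin n → ℝ) → ℝ}

lemma isSymm_augHess (hΩ : IsOpen Ω) (hu : ContDiffOn ℝ 2 u Ω) (hx : x ∈ Ω) :
    (augHess u φ x).IsSymm := by
  ext i j
  rw [transpose_apply, augHess_apply, augHess_apply, pd_comm hΩ hu hx, Matrix.one_apply,
    Matrix.one_apply]
  simp only [eq_comm]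

lemma contDiffOn_augHess (hΩ : IsOpen Ω) (hu : ContDiffOn ℝ 3 u Ω) (hφ : ContDiffOn ℝ 1 φ Ω)
    (i j : Fin n) : ContDiffOn ℝ 1 (fun y => augHess u φ y i j) Ω := by
  simp only [augHess_apply]
  exact (contDiffOn_pd hΩ (contDiffOn_pd hΩ hu (a := 2) (by norm_num) j) (by norm_num) i).sub
    (hφ.mul contDiffOn_const)

lemma pd_augHess (hΩ : IsOpen Ω) (hu : ContDiffOn ℝ 3 u Ω) (hφ : DifferentiableAt ℝ φ x)
    (hx : x ∈ Ω) (l i j : Fin n) :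
    pd l (fun y => augHess u φ y i j) x =
      pd l (pd i (pd j u)) x - pd l φ x * (1 : Matrix (Fin n) (Fin n) ℝ) i j := by
  have hu2 := contDiffOn_pd hΩ (contDiffOn_pd hΩ hu (a := 2) (by norm_num) j) (a := 1)
    (by norm_num) i
  simp only [augHess_apply]
  rw [pd_sub (differentiableAt_of_contDiffOn hΩ hu2 one_ne_zero hx) (hφ.mul_const _),
    pd_mul_const hφ]

lemma sum_pd_newtonT_augHess_succ (hΩ : IsOpen Ω) (hu : ContDiffOn ℝ 3 u Ω)
    (hφ : ContDiffOn ℝ 1 φ Ω) (hx : x ∈ Ω) (hm : m + 1 ≤ n) (j : Fin n) :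
    ∑ i, pd i (fun y => newtonT (m + 1) (augHess u φ y) i j) x =
      -((n : ℝ) - m) * esymmMat m (augHess u φ x) * pd j φ x +
        ∑ i, newtonT m (augHess u φ x) i j * pd i φ x -
          ∑ l, (∑ i, pd i (fun y => newtonT m (augHess u φ y) i l) x) * augHess u φ x l j := by
  have hφx := differentiableAt_of_contDiffOn hΩ hφ one_ne_zero hx
  have hcodazzi (i l : Fin n) :
      pd j (fun y => augHess u φ y l i) x - pd i (fun y => augHess u φ y l j) x =
        pd i φ x * (1 : Matrix (Fin n) (Fin n) ℝ) l j -
          pd j φ x * (1 : Matrix (Fin n) (Fin n) ℝ) l i := by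
    rw [pd_augHess hΩ hu hφx hx, pd_augHess hΩ hu hφx hx, pd_pd_pd_swap hΩ hu hx]
    ring
  rw [sum_pd_newtonT_succ hΩ (contDiffOn_augHess hΩ hu hφ) hx hm, neg_mul, neg_mul,
    ← trace_newtonT (augHess u φ x) (show m ≤ n by omega)]
  simp [hcodazzi, mul_sub, Finset.sum_sub_distrib, Matrix.one_apply, Matrix.trace, Finset.sum_mul]
  ring

theorem sum_pd_newtonT_augHess (hΩ : IsOpen Ω) (hu : ContDiffOn ℝ 3 u Ω)
    (hφ : ContDiffOn ℝ 1 φ Ω) (hx : x ∈ Ω) (hm : m + 1 ≤ n) (j : Fin n) :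
    ∑ i, pd i (fun y => newtonT (m + 1) (augHess u φ y) i j) x =
      -((n : ℝ) - (m + 1)) * ∑ i, newtonT m (augHess u φ x) i j * pd i φ x := by
  induction m generalizing j with
  | zero =>
    rw [sum_pd_newtonT_augHess_succ hΩ hu hφ hx hm]
    simp [newtonT, Matrix.one_apply]
    ring
  | succ m ih =>
    rw [sum_pd_newtonT_augHess_succ hΩ hu hφ hx hm]
    set A := augHess u φ x
    have hTA : newtonT m A * A = esymmMat (m + 1) A • 1 - newtonT (m + 1) A := by simp [newtonT]
    have hsum : ∑ l, (-((n : ℝ) - (m + 1)) * ∑ i, newtonT m A i l * pd i φ x) * A l j =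
        -((n : ℝ) - (m + 1)) * ∑ i, (newtonT m A * A) i j * pd i φ x := by
      simp only [Finset.mul_sum, Finset.sum_mul, Matrix.mul_apply]
      rw [Finset.sum_comm]
      exact Finset.sum_congr rfl fun i _ => Finset.sum_congr rfl fun l _ => by ring
    simp only [ih (by omega)]
    rw [hsum, hTA]
    simp only [Matrix.sub_apply, sub_mul, Finset.sum_sub_distrib, Matrix.smul_apply, smul_eq_mul,
      Matrix.one_apply, mul_ite, mul_one, mul_zero, ite_mul, zero_mul, Finset.sum_ite_eq',
      Finset.mem_univ, if_true]
    push_cast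
    ring

end NewtonDivergence

/-! ### Integration by parts against Lipschitz coefficients -/

section IntegrationByParts
variable {n : ℕ} {K O : Set (Fin n → ℝ)} {V b w : (Fin n → ℝ) → ℝ} {L : NNReal}

lemma contDiff_of_contDiffOn_of_eq_zero (hO : IsOpen O) (hK : IsClosed K) (hKO : K ⊆ O)
    {N : WithTop ℕ∞} (hw : ContDiffOn ℝ N w O) (hw0 : ∀ x ∉ K, w x = 0) : ContDiff ℝ N w := by
  refine contDiff_iff_contDiffAt.2 fun x => ?_
  by_cases hx : x ∈ O
  · exact hw.contDiffAt (hO.mem_nhds hx)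
  · exact contDiffAt_const.congr_of_eventuallyEq <| eventuallyEq_of_mem
      (hK.isOpen_compl.mem_nhds fun hxK => hx (hKO hxK)) hw0

lemma pd_eq_zero_of_notMem (hK : IsClosed K) (hw0 : ∀ x ∉ K, w x = 0) {x : Fin n → ℝ}
    (hx : x ∉ K) (j : Fin n) : pd j w x = 0 := by
  rw [pd_congr hK.isOpen_compl hx hw0, pd_const]

lemma abs_integral_mul_pd_le (hK : IsCompact K) (hw : ContDiff ℝ 1 w) (hw0 : ∀ x ∉ K, w x = 0)
    (hb : LipschitzOnWith L b K) (j : Fin n) :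
    |∫ x in K, b x * pd j w x| ≤ L * ∫ x in K, |w x| := by
  obtain ⟨g, hg, hgb⟩ := hb.extend_real
  have hsupp : HasCompactSupport w := HasCompactSupport.intro hK hw0
  obtain ⟨D, hD⟩ := hw.lipschitzWith_of_hasCompactSupport hsupp one_ne_zero
  have hparts := LipschitzWith.integral_lineDeriv_mul_eq (μ := (volume : Measure (Fin n → ℝ)))
    hg hD hsupp (Pi.single j 1)
  have hline (x : Fin n → ℝ) : lineDeriv ℝ w x (-(Pi.single j 1)) * g x = -(g x * pd j w x) := by
    rw [(hw.differentiable one_ne_zero x).lineDeriv_eq_fderiv, map_neg, neg_mul, mul_comm, pd]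
  have hext : ∫ x in K, b x * pd j w x = -∫ x, lineDeriv ℝ g x (Pi.single j 1) * w x := by
    rw [hparts, setIntegral_congr_fun (g := fun x => g x * pd j w x) hK.measurableSet
      fun x hx => by simp only [hgb hx], setIntegral_eq_integral_of_forall_compl_eq_zero fun x hx =>
        by rw [pd_eq_zero_of_notMem hK.isClosed hw0 hx, mul_zero]]
    simp only [hline, integral_neg, neg_neg]
  rw [hext, abs_neg, setIntegral_eq_integral_of_forall_compl_eq_zero fun x hx => by
    rw [hw0 x hx, abs_zero], ← integral_const_mul, ← Real.norm_eq_abs]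
  refine norm_integral_le_of_norm_le
    ((hw.continuous.integrable_of_hasCompactSupport hsupp).abs.const_mul _)
    (Eventually.of_forall fun x => ?_)
  rw [norm_mul, Real.norm_eq_abs (w x)]
  gcongr
  simpa [Pi.norm_single] using norm_lineDeriv_le_of_lipschitz ℝ hg (v := Pi.single j 1)

lemma continuousOn_pd (hO : IsOpen O) (hKO : K ⊆ O) (hw : ContDiffOn ℝ 1 w O) (j : Fin n) :
    ContinuousOn (pd j w) K :=
  (contDiffOn_pd hO hw (a := 0) (by norm_num) j).continuousOn.mono hKO

variable {Y : Fin n → (Fin n → ℝ) → ℝ}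

lemma setIntegral_mul_sum_mul_pd (hK : IsCompact K) (hO : IsOpen O) (hKO : K ⊆ O)
    (hV : ContDiffOn ℝ 1 V O) (hY : ∀ j, ContDiffOn ℝ 1 (Y j) O) (hb : ContinuousOn b K) :
    ∫ x in K, b x * ∑ j, Y j x * pd j V x =
      ∑ j, (∫ x in K, b x * pd j (fun y => V y * Y j y) x) -
        ∫ x in K, b x * (V x * ∑ j, pd j (Y j) x) := by
  have hcpd (j : Fin n) := hb.fun_mul (continuousOn_pd hO hKO (hV.mul (hY j)) j)
  have hcdiv := hb.fun_mul ((hV.continuousOn.mono hKO).fun_mul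
    (continuousOn_finsetSum Finset.univ fun j _ => continuousOn_pd hO hKO (hY j) j))
  rw [← integral_finsetSum _ fun j _ => (hcpd j).integrableOn_compact hK,
    ← integral_sub ((continuousOn_finsetSum _ fun j _ => hcpd j).integrableOn_compact hK)
      (hcdiv.integrableOn_compact hK)]
  refine setIntegral_congr_fun hK.measurableSet fun x hx => ?_
  simp only [pd_mul (differentiableAt_of_contDiffOn hO hV one_ne_zero (hKO hx))
    (differentiableAt_of_contDiffOn hO (hY _) one_ne_zero (hKO hx)), ← Finset.mul_sum,
    Finset.sum_add_distrib, mul_comm (pd _ V x)]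
  ring

theorem abs_setIntegral_mul_sum_mul_pd_le (hK : IsCompact K) (hO : IsOpen O) (hKO : K ⊆ O)
    (hV : ContDiffOn ℝ 1 V O) (hY : ∀ j, ContDiffOn ℝ 1 (Y j) O)
    (hY0 : ∀ j, ∀ x ∉ K, Y j x = 0) (hb : LipschitzOnWith L b K) {B : ℝ}
    (hbB : ∀ x ∈ K, |b x| ≤ B) :
    |∫ x in K, b x * ∑ j, Y j x * pd j V x| ≤
      ∫ x in K, |V x| * (L * ∑ j, |Y j x| + B * |∑ j, pd j (Y j) x|) := by
  have hVY0 (j : Fin n) : ∀ x ∉ K, V x * Y j x = 0 := fun x hx => by rw [hY0 j x hx, mul_zero]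
  have hVY (j : Fin n) : ContDiff ℝ 1 fun x => V x * Y j x :=
    contDiff_of_contDiffOn_of_eq_zero hO hK.isClosed hKO (hV.mul (hY j)) (hVY0 j)
  have hcV := (hV.continuousOn.mono hKO).abs
  have hcY := continuousOn_finsetSum Finset.univ fun j _ => ((hY j).continuousOn.mono hKO).abs
  have hcdiv := (continuousOn_finsetSum Finset.univ fun j _ => continuousOn_pd hO hKO (hY j) j).abs
  have hflux : |∑ j, ∫ x in K, b x * pd j (fun y => V y * Y j y) x| ≤
      ∫ x in K, |V x| * (L * ∑ j, |Y j x|) := by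
    calc |∑ j, ∫ x in K, b x * pd j (fun y => V y * Y j y) x|
        ≤ ∑ j, L * ∫ x in K, |V x * Y j x| := (Finset.abs_sum_le_sum_abs _ _).trans <|
          Finset.sum_le_sum fun j _ => abs_integral_mul_pd_le hK (hVY j) (hVY0 j) hb j
      _ = ∫ x in K, |V x| * (L * ∑ j, |Y j x|) := by
        rw [← Finset.mul_sum, ← integral_finsetSum _ fun j _ =>
          (hVY j).continuous.abs.continuousOn.integrableOn_compact hK, ← integral_const_mul]
        simp only [abs_mul, ← Finset.mul_sum, mul_left_comm]
  have hdiv : |∫ x in K, b x * (V x * ∑ j, pd j (Y j) x)| ≤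
      ∫ x in K, |V x| * (B * |∑ j, pd j (Y j) x|) := by
    rw [← Real.norm_eq_abs]
    refine norm_integral_le_of_norm_le
      ((hcV.fun_mul (continuousOn_const.fun_mul hcdiv)).integrableOn_compact hK) ?_
    filter_upwards [ae_restrict_mem hK.measurableSet] with x hx
    rw [norm_mul, norm_mul, mul_left_comm]
    simp only [Real.norm_eq_abs]
    gcongr
    exact hbB x hx
  simp only [mul_add]
  rw [setIntegral_mul_sum_mul_pd hK hO hKO hV hY hb.continuousOn,
    integral_add ((hcV.fun_mul (continuousOn_const.fun_mul hcY)).integrableOn_compact hK)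
      ((hcV.fun_mul (continuousOn_const.fun_mul hcdiv)).integrableOn_compact hK)]
  exact (abs_sub _ _).trans (add_le_add hflux hdiv)

end IntegrationByParts

section Powers
variable {a b c q : ℝ}

lemma rpow_mul_pow_mul_le_add (ha : 0 ≤ a) (hb : 0 ≤ b) (hc : 0 ≤ c) (hq : 1 ≤ q) (N : ℕ) :
    a ^ (q - 1) * b ^ N * c ≤ a ^ (q + N) + b ^ (q + N) + c ^ (q + N) := by
  obtain ⟨m, hm, ham, hbm, hcm⟩ : ∃ m, (m = a ∨ m = b ∨ m = c) ∧ a ≤ m ∧ b ≤ m ∧ c ≤ m :=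
    ⟨max a (max b c), by grind, by grind, by grind, by grind⟩
  have hm₀ := ha.trans ham
  have hsplit : m ^ (q - 1) * m ^ N * m = m ^ (q + N) := by
    rw [← Real.rpow_natCast, ← Real.rpow_add_of_nonneg hm₀ (sub_nonneg.2 hq) N.cast_nonneg,
      ← Real.rpow_add_one' hm₀ (by linarith [N.cast_nonneg (α := ℝ)])]
    ring_nf
  have hpow : a ^ (q - 1) * b ^ N * c ≤ m ^ (q + N) := by
    rw [← hsplit]
    gcongr
  have ha' := Real.rpow_nonneg ha (q + N)
  have hb' := Real.rpow_nonneg hb (q + N)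
  have hc' := Real.rpow_nonneg hc (q + N)
  rcases hm with rfl | rfl | rfl <;> linarith

/-- The primitive of `(t⁺)^(q-1)` that vanishes at `0`. -/
noncomputable def posPartPowPrimitive (q t : ℝ) : ℝ :=
  ∫ s in (0 : ℝ)..t, max s 0 ^ (q - 1)

lemma continuous_posPart_rpow (hq : 0 ≤ q) : Continuous fun t : ℝ => max t 0 ^ q :=
  (continuous_id.max continuous_const).rpow_const fun _ => Or.inr hq

lemma hasDerivAt_posPartPowPrimitive (hq : 1 ≤ q) (t : ℝ) :
    HasDerivAt (posPartPowPrimitive q) (max t 0 ^ (q - 1)) t :=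
  ((continuous_posPart_rpow (sub_nonneg.2 hq)).integral_hasStrictDerivAt 0 t).hasDerivAt

lemma contDiff_posPartPowPrimitive (hq : 1 ≤ q) : ContDiff ℝ 1 (posPartPowPrimitive q) := by
  refine contDiff_one_iff_deriv.2
    ⟨fun t => (hasDerivAt_posPartPowPrimitive hq t).differentiableAt, ?_⟩
  rw [funext fun t => (hasDerivAt_posPartPowPrimitive hq t).deriv]
  exact continuous_posPart_rpow (sub_nonneg.2 hq)

lemma abs_posPartPowPrimitive_le (hq : 1 < q) (t : ℝ) :
    |posPartPowPrimitive q t| ≤ max t 0 ^ (q - 1) * max t 0 := by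
  have hmono (s : ℝ) (hs : s ∈ uIoc 0 t) : ‖max s 0 ^ (q - 1)‖ ≤ max t 0 ^ (q - 1) := by
    rw [Real.norm_of_nonneg (Real.rpow_nonneg (le_max_right _ _) _)]
    refine Real.rpow_le_rpow (le_max_right _ _) ?_ (by linarith)
    rcases mem_uIoc.1 hs with h | h
    · exact max_le_max_right _ h.2
    · exact (max_eq_right h.2).trans_le (le_max_right _ _)
  have hint := intervalIntegral.norm_integral_le_of_norm_le_const hmono
  rw [sub_zero] at hint
  rw [← Real.norm_eq_abs, posPartPowPrimitive]
  rcases le_total 0 t with h | h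
  · rw [abs_of_nonneg h] at hint
    exact hint.trans (mul_le_mul_of_nonneg_left (le_max_left t 0)
      (Real.rpow_nonneg (le_max_right _ _) _))
  · simpa [max_eq_right h, Real.zero_rpow (sub_ne_zero.2 hq.ne')] using hint

end Powers

section SegmentAverages
variable {E : Type*} [NormedAddCommGroup E] {w : E → ℝ} {x₀ e : E} {r h : ℝ}

lemma add_smul_mem_closedBall [NormedSpace ℝ E] {x : E} {s : ℝ} (he : ‖e‖ ≤ 1)
    (hs : s ∈ Icc (-1 : ℝ) 1)
    (hx : x ∈ closedBall x₀ r) : x + (s * h) • e ∈ closedBall x₀ (r + |h|) := by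
  have hstep : ‖(s * h) • e‖ ≤ |h| := by
    rw [norm_smul, norm_mul, Real.norm_eq_abs, Real.norm_eq_abs]
    exact (mul_le_of_le_one_right (by positivity) he).trans
      (mul_le_of_le_one_left (abs_nonneg h) (abs_le.2 hs))
  rw [mem_closedBall_iff_norm] at hx ⊢
  rw [add_sub_right_comm]
  exact (norm_add_le _ _).trans (add_le_add hx hstep)

variable [MeasurableSpace E] [BorelSpace E] {μ : Measure E} [μ.IsAddHaarMeasure]

lemma setIntegral_comp_add_right_le {v : E} {r' : ℝ} (hv : r + ‖v‖ ≤ r')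
    (hw : IntegrableOn w (closedBall x₀ r') μ) (hw₀ : ∀ y ∈ closedBall x₀ r', 0 ≤ w y) :
    ∫ x in closedBall x₀ r, w (x + v) ∂μ ≤ ∫ x in closedBall x₀ r', w x ∂μ := by
  have hpre : closedBall x₀ r = (· + v) ⁻¹' closedBall (x₀ + v) r := by
    ext y
    simp
  rw [hpre, (measurePreserving_add_right μ v).setIntegral_preimage_emb
    (measurableEmbedding_addRight v)]
  refine setIntegral_mono_set hw ((ae_restrict_mem measurableSet_closedBall).mono hw₀)
    (Eventually.of_forall (closedBall_subset_closedBall' ?_))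
  rwa [dist_self_add_left]

variable [NormedSpace ℝ E] [ProperSpace E]

lemma integrable_prod_comp_add_smul (he : ‖e‖ ≤ 1) (hw : ContinuousOn w (closedBall x₀ (r + |h|))) :
    Integrable (Function.uncurry fun (x : E) (s : ℝ) => w (x + (s * h) • e))
      ((μ.restrict (closedBall x₀ r)).prod (volume.restrict (Ioc (-1) 1))) := by
  rw [Measure.prod_restrict]
  refine IntegrableOn.mono_set (ContinuousOn.integrableOn_compact
    ((isCompact_closedBall x₀ r).prod (isCompact_Icc (a := (-1 : ℝ)) (b := 1))) ?_)
    (prod_mono subset_rfl Ioc_subset_Icc_self)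
  exact hw.comp (Continuous.continuousOn (by fun_prop))
    fun p hp => add_smul_mem_closedBall he hp.2 hp.1

lemma integrableOn_integral_comp_add_smul (he : ‖e‖ ≤ 1)
    (hw : ContinuousOn w (closedBall x₀ (r + |h|))) :
    IntegrableOn (fun x => ∫ s in (-1 : ℝ)..1, w (x + (s * h) • e)) (closedBall x₀ r) μ := by
  simp only [intervalIntegral.integral_of_le (show (-1 : ℝ) ≤ 1 by norm_num)]
  exact (integrable_prod_comp_add_smul he hw).integral_prod_left

lemma setIntegral_integral_comp_add_smul_le (he : ‖e‖ ≤ 1)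
    (hw : ContinuousOn w (closedBall x₀ (r + |h|)))
    (hw₀ : ∀ y ∈ closedBall x₀ (r + |h|), 0 ≤ w y) :
    ∫ x in closedBall x₀ r, (∫ s in (-1 : ℝ)..1, w (x + (s * h) • e)) ∂μ ≤
      2 * ∫ x in closedBall x₀ (r + |h|), w x ∂μ := by
  simp only [intervalIntegral.integral_of_le (show (-1 : ℝ) ≤ 1 by norm_num)]
  rw [integral_integral_swap (integrable_prod_comp_add_smul he hw)]
  have hshift (s : ℝ) (hs : s ∈ Ioc (-1 : ℝ) 1) :
      ∫ x in closedBall x₀ r, w (x + (s * h) • e) ∂μ ≤ ∫ x in closedBall x₀ (r + |h|), w x ∂μ := by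
    refine setIntegral_comp_add_right_le ?_ (hw.integrableOn_compact (isCompact_closedBall _ _)) hw₀
    rw [norm_smul, norm_mul, Real.norm_eq_abs, Real.norm_eq_abs]
    gcongr
    exact (mul_le_of_le_one_right (by positivity) he).trans
      (mul_le_of_le_one_left (abs_nonneg h) (abs_le.2 ⟨hs.1.le, hs.2⟩))
  calc _ ≤ ∫ _ in Ioc (-1 : ℝ) 1, (∫ x in closedBall x₀ (r + |h|), w x ∂μ) :=
        setIntegral_mono_on (integrable_prod_comp_add_smul he hw).integral_prod_right
          (integrable_const _) measurableSet_Ioc hshift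
    _ = _ := by
        rw [setIntegral_const, Real.volume_real_Ioc_of_le (by norm_num), smul_eq_mul]
        norm_num

end SegmentAverages

/-! ### Admissible solutions and orders of growth in the weight -/

section EuclideanBounds
variable {n : ℕ}

lemma abs_apply_le_vnorm (ξ : Fin n → ℝ) (i : Fin n) : |ξ i| ≤ vnorm ξ :=
  Real.abs_le_sqrt (Finset.single_le_sum (f := fun i => ξ i ^ 2) (fun _ _ => sq_nonneg _)
    (Finset.mem_univ i))

lemma abs_apply_le_matNorm (A : Matrix (Fin n) (Fin n) ℝ) (i j : Fin n) : |A i j| ≤ matNorm A := by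
  have hop := (LinearMap.toContinuousLinearMap (Matrix.toEuclideanLin A)).le_opNorm
    (EuclideanSpace.single j (1 : ℝ))
  rw [PiLp.norm_single, norm_one, mul_one] at hop
  refine le_trans ?_ hop
  simpa [Matrix.toLpLin_apply] using PiLp.norm_apply_le
    ((LinearMap.toContinuousLinearMap (Matrix.toEuclideanLin A))
      (EuclideanSpace.single j (1 : ℝ))) i

lemma abs_clm_apply_le_norm {E : Type*} [NormedAddCommGroup E] [NormedSpace ℝ E] (T : E →L[ℝ] ℝ)
    {v : E} (hv : ‖v‖ ≤ 1) : |T v| ≤ ‖T‖ :=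
  (T.le_opNorm v).trans (mul_le_of_le_one_right (norm_nonneg T) hv)

lemma norm_fderiv_le_of_abs_pd_le {w : (Fin n → ℝ) → ℝ} {x : Fin n → ℝ} {B : ℝ} (hB : 0 ≤ B)
    (h : ∀ i, |pd i w x| ≤ B) : ‖fderiv ℝ w x‖ ≤ n * B := by
  refine ContinuousLinearMap.opNorm_le_bound _ (by positivity) fun v => ?_
  calc ‖fderiv ℝ w x v‖ = |∑ i, v i * pd i w x| := by
        conv_lhs => rw [Real.norm_eq_abs, pi_eq_sum_univ' v, map_sum]
        simp only [map_smul, smul_eq_mul, pd]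
    _ ≤ ∑ _ : Fin n, ‖v‖ * B := (Finset.abs_sum_le_sum_abs _ _).trans <|
        Finset.sum_le_sum fun _ _ => by
          rw [abs_mul]
          exact mul_le_mul (norm_le_pi_norm v _) (h _) (abs_nonneg _) (norm_nonneg _)
    _ = n * B * ‖v‖ := by simp; ring

lemma exists_forall_abs_le_of_isCompact {Ω K : Set (Fin n → ℝ)}
    {g : (Fin n → ℝ) × ℝ × (Fin n → ℝ) → ℝ}
    (hg : ContinuousOn g (Ω ×ˢ ((univ : Set ℝ) ×ˢ (univ : Set (Fin n → ℝ)))))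
    (hK : IsCompact K) (hKΩ : K ⊆ Ω) (M : ℝ) :
    ∃ Λ, ∀ x ∈ K, ∀ z ξ, |z| + vnorm ξ ≤ M → |g (x, z, ξ)| ≤ Λ := by
  obtain ⟨Λ, hΛ⟩ := (hK.prod ((isCompact_Icc (a := -M) (b := M)).prod
    (isCompact_closedBall (0 : Fin n → ℝ) M))).exists_bound_of_continuousOn
    (hg.mono (prod_mono hKΩ (prod_mono (subset_univ _) (subset_univ _))))
  refine ⟨Λ, fun x hx z ξ hM => hΛ _ ⟨hx, abs_le.1 ?_, mem_closedBall_zero_iff.2 ?_⟩⟩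
  · exact (le_add_of_nonneg_right (Real.sqrt_nonneg _)).trans hM
  · have hξ : vnorm ξ ≤ M := (le_add_of_nonneg_left (abs_nonneg z)).trans hM
    exact (pi_norm_le_iff_of_nonneg ((Real.sqrt_nonneg _).trans hξ)).2
      fun i => (abs_apply_le_vnorm ξ i).trans hξ

end EuclideanBounds

/-- The data on which the constant in the cancellation estimate may depend: the order `k = κ + 2`
of the equation, the coefficient `H₁`, the balls, the bound `M` for `|u| + |∇u|`, a bound `Λ` for
`σ_k(A_H[u])`, through which the right-hand side `f` enters, and the constant `c₀` in the gradient
bound for cutoffs. -/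
structure CancellationSetting (n : ℕ) where
  κ : ℕ
  Ω : Set (Fin n → ℝ)
  H₁ : (Fin n → ℝ) × ℝ → ℝ
  x₀ : Fin n → ℝ
  R : ℝ
  M : ℝ
  Λ : ℝ
  c₀ : ℝ
  κ_add_two_le : κ + 2 ≤ n
  isOpen_Ω : IsOpen Ω
  H₁_nonneg : ∀ p ∈ Ω ×ˢ (univ : Set ℝ), 0 ≤ H₁ p
  c11On_H₁ : C11On H₁ (Ω ×ˢ (univ : Set ℝ))
  R_pos : 0 < R
  closedBall_subset : closedBall x₀ (2 * R) ⊆ Ω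
  c₀_nonneg : 0 ≤ c₀

namespace CancellationSetting
variable {n : ℕ} (D : CancellationSetting n) {u : (Fin n → ℝ) → ℝ} {C₁ : ℝ} {x : Fin n → ℝ}

/-- The scalar `H₁(y,u)|∇u|²` subtracted from the Hessian. -/
noncomputable def φ (u : (Fin n → ℝ) → ℝ) (y : Fin n → ℝ) : ℝ :=
  D.H₁ (y, u y) * normSq (grad u y)

/-- The Newton tensor `T_m(A_H[u])`. -/
noncomputable def T (m : ℕ) (u : (Fin n → ℝ) → ℝ) (y : Fin n → ℝ) : Matrix (Fin n) (Fin n) ℝ :=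
  newtonT m (augHess u (D.φ u) y)

/-- The elementary symmetric function `σ_m(A_H[u])`. -/
noncomputable def σ (m : ℕ) (u : (Fin n → ℝ) → ℝ) (y : Fin n → ℝ) : ℝ :=
  esymmMat m (augHess u (D.φ u) y)

/-- The weight `Δu + C₁`, which controls the full Hessian of an admissible function. -/
noncomputable def weight (u : (Fin n → ℝ) → ℝ) (C₁ : ℝ) (y : Fin n → ℝ) : ℝ :=
  lapl u y + C₁

/-- An admissible function: a `C³` function with the gradient, Hessian and `σ_m` bounds that
solutions of the equation satisfy. -/
structure IsAdmissible (u : (Fin n → ℝ) → ℝ) (C₁ : ℝ) : Prop where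
  contDiffOn : ContDiffOn ℝ 3 u D.Ω
  abs_add_vnorm_le : ∀ x ∈ ball D.x₀ (2 * D.R), |u x| + vnorm (grad u x) ≤ D.M
  one_le_weight : ∀ x ∈ ball D.x₀ (2 * D.R), 1 ≤ weight u C₁ x
  matNorm_hess_le : ∀ x ∈ ball D.x₀ (2 * D.R), matNorm (hess u x) ≤ weight u C₁ x
  σ_nonneg : ∀ x ∈ ball D.x₀ (2 * D.R), 0 ≤ D.σ (D.κ + 1) u x
  abs_σ_le : ∀ x ∈ ball D.x₀ (2 * D.R), |D.σ (D.κ + 2) u x| ≤ D.Λ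

/-- An admissible function together with a point of the large ball: the index type over which all
bounds are uniform. -/
structure State where
  u : (Fin n → ℝ) → ℝ
  C₁ : ℝ
  x : Fin n → ℝ
  adm : D.IsAdmissible u C₁
  mem : x ∈ ball D.x₀ (2 * D.R)

/-- `F` is bounded by a multiple of `(Δu + C₁)^m`, uniformly in all states. -/
abbrev IsOrder (m : ℕ) (F : D.State → ℝ) : Prop :=
  F =O[⊤] fun s => weight s.u s.C₁ s.x ^ m

variable {D}

namespace IsOrder
variable {l m N : ℕ} {F G : D.State → ℝ}

lemma mono (hF : D.IsOrder m F) (h : m ≤ N) : D.IsOrder N F := by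
  refine hF.trans (isBigO_of_le _ fun s => ?_)
  have hw := s.adm.one_le_weight s.x s.mem
  rw [Real.norm_of_nonneg (by positivity), Real.norm_of_nonneg (by positivity)]
  exact pow_le_pow_right₀ hw h

lemma of_abs_le {C : ℝ} (h : ∀ s, |F s| ≤ C) : D.IsOrder 0 F :=
  isBigO_top.2 ⟨C, fun s => by simpa using h s⟩

lemma const (c : ℝ) : D.IsOrder 0 fun _ => c :=
  of_abs_le fun _ => le_rfl

lemma mul (hF : D.IsOrder l F) (hG : D.IsOrder m G) (h : l + m ≤ N) :
    D.IsOrder N fun s => F s * G s := by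
  refine mono (m := l + m) ?_ h
  simpa only [IsOrder, pow_add] using IsBigO.mul hF hG

lemma exists_abs_le (hF : D.IsOrder m F) :
    ∃ C, 0 ≤ C ∧ ∀ s, |F s| ≤ C * weight s.u s.C₁ s.x ^ m := by
  obtain ⟨C, hC, hFC⟩ := hF.exists_nonneg
  refine ⟨C, hC, fun s => ?_⟩
  have hw := s.adm.one_le_weight s.x s.mem
  simpa [abs_of_pos (zero_lt_one.trans_le hw)] using isBigOWith_top.1 hFC s

end IsOrder

section Domains

lemma mem_Ω (hx : x ∈ ball D.x₀ (2 * D.R)) : x ∈ D.Ω :=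
  D.closedBall_subset (ball_subset_closedBall hx)

lemma IsAdmissible.abs_apply_le (h : D.IsAdmissible u C₁) (hx : x ∈ ball D.x₀ (2 * D.R)) :
    |u x| ≤ D.M :=
  (le_add_of_nonneg_right (Real.sqrt_nonneg _)).trans (h.abs_add_vnorm_le x hx)

lemma IsAdmissible.abs_pd_le (h : D.IsAdmissible u C₁) (hx : x ∈ ball D.x₀ (2 * D.R))
    (i : Fin n) : |pd i u x| ≤ D.M :=
  (abs_apply_le_vnorm (grad u x) i).trans
    ((le_add_of_nonneg_left (abs_nonneg _)).trans (h.abs_add_vnorm_le x hx))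

lemma IsAdmissible.abs_pd_pd_le (h : D.IsAdmissible u C₁) (hx : x ∈ ball D.x₀ (2 * D.R))
    (i j : Fin n) : |pd i (pd j u) x| ≤ weight u C₁ x :=
  (abs_apply_le_matNorm (hess u x) i j).trans (h.matNorm_hess_le x hx)

variable (D) in
/-- A compact set containing the graphs of all admissible functions. -/
def graphBox : Set ((Fin n → ℝ) × ℝ) :=
  closedBall D.x₀ (2 * D.R) ×ˢ Icc (-D.M) D.M

lemma isCompact_graphBox : IsCompact D.graphBox :=
  (isCompact_closedBall _ _).prod isCompact_Icc

lemma graphBox_subset : D.graphBox ⊆ D.Ω ×ˢ univ :=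
  prod_mono D.closedBall_subset (subset_univ _)

lemma isOpen_Ω_prod_univ : IsOpen (D.Ω ×ˢ (univ : Set ℝ)) :=
  D.isOpen_Ω.prod isOpen_univ

lemma IsAdmissible.mem_graphBox (h : D.IsAdmissible u C₁) (hx : x ∈ ball D.x₀ (2 * D.R)) :
    (x, u x) ∈ D.graphBox :=
  ⟨ball_subset_closedBall hx, abs_le.1 (h.abs_apply_le hx)⟩

end Domains

section H₁

variable (D) in
lemma exists_norm_fderiv_H₁_le : ∃ C, ∀ p ∈ D.graphBox, ‖fderiv ℝ D.H₁ p‖ ≤ C :=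
  isCompact_graphBox.exists_bound_of_continuousOn
    ((D.c11On_H₁.1.fderiv_of_isOpen isOpen_Ω_prod_univ (m := 0) (by norm_num)).continuousOn.mono
      graphBox_subset)

variable (D) in
lemma exists_lipschitzOnWith_fderiv_H₁ :
    ∃ L, LipschitzOnWith L (fderiv ℝ D.H₁) D.graphBox := by
  refine LocallyLipschitzOn.exists_lipschitzOnWith_of_compact isCompact_graphBox fun p hp => ?_
  obtain ⟨K, t, ht, hK⟩ := D.c11On_H₁.2 p (graphBox_subset hp)
  refine ⟨K, t ∩ D.Ω ×ˢ univ, nhdsWithin_mono _ graphBox_subset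
    (inter_mem ht self_mem_nhdsWithin), fun y hy z hz => ?_⟩
  simpa only [fderivWithin_of_isOpen isOpen_Ω_prod_univ hy.2,
    fderivWithin_of_isOpen isOpen_Ω_prod_univ hz.2] using hK hy.1 hz.1

lemma contDiffOn_H₁_comp (hu : ContDiffOn ℝ 3 u D.Ω) :
    ContDiffOn ℝ 1 (fun y => D.H₁ (y, u y)) D.Ω :=
  D.c11On_H₁.1.comp (contDiffOn_id.prodMk (hu.of_le (by norm_num))) fun _ hy => ⟨hy, mem_univ _⟩

lemma pd_H₁_comp (hu : ContDiffOn ℝ 3 u D.Ω) (hx : x ∈ D.Ω) (i : Fin n) :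
    pd i (fun y => D.H₁ (y, u y)) x = fderiv ℝ D.H₁ (x, u x) (Pi.single i 1, 0) +
      fderiv ℝ D.H₁ (x, u x) (0, 1) * pd i u x :=
  pd_comp_graph ((D.c11On_H₁.1.contDiffAt (isOpen_Ω_prod_univ.mem_nhds
    ⟨hx, mem_univ _⟩)).differentiableAt one_ne_zero)
    (differentiableAt_of_contDiffOn D.isOpen_Ω hu (by norm_num) hx)

lemma isOrder_fderiv_H₁ {v : (Fin n → ℝ) × ℝ} (hv : ‖v‖ ≤ 1) :
    D.IsOrder 0 fun s => fderiv ℝ D.H₁ (s.x, s.u s.x) v := by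
  obtain ⟨C, hC⟩ := D.exists_norm_fderiv_H₁_le
  exact .of_abs_le fun s => (abs_clm_apply_le_norm _ hv).trans (hC _ (s.adm.mem_graphBox s.mem))

lemma isOrder_pd (i : Fin n) : D.IsOrder 0 fun s => pd i s.u s.x :=
  .of_abs_le fun s => s.adm.abs_pd_le s.mem i

lemma isOrder_pd_pd (i j : Fin n) : D.IsOrder 1 fun s => pd i (pd j s.u) s.x :=
  isBigO_of_le _ fun s => by
    rw [pow_one]
    exact (s.adm.abs_pd_pd_le s.mem i j).trans (le_abs_self _)

lemma norm_single_zero_le_one (i : Fin n) : ‖((Pi.single i 1, 0) : (Fin n → ℝ) × ℝ)‖ ≤ 1 := by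
  simp [Prod.norm_def, Pi.norm_single]

lemma norm_zero_one_le_one : ‖((0, 1) : (Fin n → ℝ) × ℝ)‖ ≤ 1 := by
  simp [Prod.norm_def]

lemma isOrder_pd_H₁_comp (i : Fin n) :
    D.IsOrder 0 fun s => pd i (fun y => D.H₁ (y, s.u y)) s.x := by
  simp only [fun s : D.State => pd_H₁_comp s.adm.contDiffOn (mem_Ω s.mem) i]
  exact (isOrder_fderiv_H₁ (norm_single_zero_le_one i)).add
    ((isOrder_fderiv_H₁ norm_zero_one_le_one).mul (isOrder_pd i) le_rfl)

end H₁

/-- A scalar `c[u]` that is `C¹` in the point and satisfies `c = O(1)`, `∇c = O(Δu + C₁)`: the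
bounds enjoyed by smooth functions of `(x, u, ∇u)`. -/
structure IsFirstOrder (D : CancellationSetting n)
    (c : ((Fin n → ℝ) → ℝ) → (Fin n → ℝ) → ℝ) : Prop where
  contDiffOn : ∀ u, ContDiffOn ℝ 3 u D.Ω → ContDiffOn ℝ 1 (c u) D.Ω
  isOrder : D.IsOrder 0 fun s => c s.u s.x
  isOrder_pd : ∀ j, D.IsOrder 1 fun s => pd j (c s.u) s.x

namespace IsFirstOrder
variable {c d : ((Fin n → ℝ) → ℝ) → (Fin n → ℝ) → ℝ}

lemma differentiableAt (hc : D.IsFirstOrder c) (s : D.State) : DifferentiableAt ℝ (c s.u) s.x :=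
  differentiableAt_of_contDiffOn D.isOpen_Ω (hc.contDiffOn s.u s.adm.contDiffOn) one_ne_zero
    (mem_Ω s.mem)

lemma const (c : ℝ) : D.IsFirstOrder fun _ _ => c where
  contDiffOn _ _ := contDiffOn_const
  isOrder := .const c
  isOrder_pd j := by simpa using (IsOrder.const (D := D) 0).mono zero_le_one

lemma mul (hc : D.IsFirstOrder c) (hd : D.IsFirstOrder d) :
    D.IsFirstOrder fun u y => c u y * d u y where
  contDiffOn u hu := (hc.contDiffOn u hu).mul (hd.contDiffOn u hu)
  isOrder := hc.isOrder.mul hd.isOrder le_rfl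
  isOrder_pd j := by
    simp only [fun s => pd_mul (i := j) (hc.differentiableAt s) (hd.differentiableAt s)]
    exact ((hc.isOrder_pd j).mul hd.isOrder le_rfl).add (hc.isOrder.mul (hd.isOrder_pd j) le_rfl)

lemma sum {ι : Type*} {S : Finset ι} {c : ι → ((Fin n → ℝ) → ℝ) → (Fin n → ℝ) → ℝ}
    (hc : ∀ i ∈ S, D.IsFirstOrder (c i)) : D.IsFirstOrder fun u y => ∑ i ∈ S, c i u y where
  contDiffOn u hu := ContDiffOn.sum fun i hi => (hc i hi).contDiffOn u hu
  isOrder := IsBigO.fun_sum fun i hi => (hc i hi).isOrder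
  isOrder_pd j := by
    simp only [fun s => pd_sum (i := j) fun i hi => (hc i hi).differentiableAt s]
    exact IsBigO.fun_sum fun i hi => (hc i hi).isOrder_pd j

lemma pd_u (l : Fin n) : D.IsFirstOrder fun u => pd l u where
  contDiffOn _ hu := contDiffOn_pd D.isOpen_Ω hu (by norm_num) l
  isOrder := CancellationSetting.isOrder_pd l
  isOrder_pd j := isOrder_pd_pd j l

lemma H₁_comp : D.IsFirstOrder fun u y => D.H₁ (y, u y) where
  contDiffOn _ := contDiffOn_H₁_comp
  isOrder := by
    obtain ⟨C, hC⟩ := isCompact_graphBox.exists_bound_of_continuousOn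
      (D.c11On_H₁.1.continuousOn.mono graphBox_subset)
    exact .of_abs_le fun s => hC _ (s.adm.mem_graphBox s.mem)
  isOrder_pd j := (isOrder_pd_H₁_comp j).mono zero_le_one

lemma normSq_grad : D.IsFirstOrder fun u y => normSq (grad u y) := by
  simp only [normSq, grad, pow_two]
  exact sum fun l _ => (pd_u l).mul (pd_u l)

lemma φ : D.IsFirstOrder D.φ :=
  H₁_comp.mul normSq_grad

end IsFirstOrder

/-! ### Fields with controlled divergence -/

section NewtonField
variable {m : ℕ}

lemma contDiffOn_φ (hu : ContDiffOn ℝ 3 u D.Ω) : ContDiffOn ℝ 1 (D.φ u) D.Ω :=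
  IsFirstOrder.φ.contDiffOn u hu

lemma contDiffOn_T (m : ℕ) (hu : ContDiffOn ℝ 3 u D.Ω) (i j : Fin n) :
    ContDiffOn ℝ 1 (fun y => D.T m u y i j) D.Ω :=
  contDiffOn_newtonT m (contDiffOn_augHess D.isOpen_Ω hu (contDiffOn_φ hu)) i j

lemma isOrder_augHess (i j : Fin n) :
    D.IsOrder 1 fun s => augHess s.u (D.φ s.u) s.x i j := by
  simp only [augHess_apply]
  exact (isOrder_pd_pd i j).sub (IsFirstOrder.φ.isOrder.mul (.const _) zero_le_one)

lemma isOrder_T (hm : m ≤ n) (i j : Fin n) : D.IsOrder m fun s => D.T m s.u s.x i j :=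
  isBigO_newtonT (fun i j => by simpa only [IsOrder, pow_one] using isOrder_augHess i j) hm i j

lemma isOrder_σ (hm : m ≤ n) : D.IsOrder m fun s => D.σ m s.u s.x :=
  isBigO_esymmMat (fun i j => by simpa only [IsOrder, pow_one] using isOrder_augHess i j) hm

lemma sum_pd_T (hu : ContDiffOn ℝ 3 u D.Ω) (hx : x ∈ D.Ω) (hm : m + 1 ≤ n) (j : Fin n) :
    ∑ i, pd i (fun y => D.T (m + 1) u y i j) x =
      -((n : ℝ) - (m + 1)) * ∑ i, D.T m u x i j * pd i (D.φ u) x :=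
  sum_pd_newtonT_augHess D.isOpen_Ω hu (contDiffOn_φ hu) hx hm j

lemma isOrder_sum_pd_T (hm : m ≤ n) (j : Fin n) :
    D.IsOrder m fun s => ∑ i, pd i (fun y => D.T m s.u y i j) s.x := by
  cases m with
  | zero => simpa [T, newtonT] using IsOrder.const (D := D) 0
  | succ m =>
    simp only [fun s : D.State => sum_pd_T s.adm.contDiffOn (mem_Ω s.mem) hm j]
    exact (IsBigO.fun_sum fun i _ => (isOrder_T (by omega) i j).mul
      (IsFirstOrder.φ.isOrder_pd i) le_rfl).const_mul_left _

lemma sum_T_mul_pd_pd (hu : ContDiffOn ℝ 3 u D.Ω) (hx : x ∈ D.Ω) (hm : m + 1 ≤ n) :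
    ∑ j, ∑ l, D.T m u x j l * pd j (pd l u) x =
      (m + 1) * D.σ (m + 1) u x + D.φ u x * ((n - m) * D.σ m u x) := by
  have hpd (j l : Fin n) : pd j (pd l u) x =
      augHess u (D.φ u) x l j + D.φ u x * (1 : Matrix (Fin n) (Fin n) ℝ) l j := by
    rw [augHess_apply, pd_comm D.isOpen_Ω (hu.of_le (by norm_num)) hx]
    ring
  rw [σ, σ, ← trace_newtonT_mul_self _ hm, ← trace_newtonT _ (show m ≤ n by omega)]
  simp only [hpd, mul_add, Finset.sum_add_distrib, T, Matrix.trace, Matrix.diag_apply,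
    Matrix.mul_apply, Matrix.one_apply, Finset.mul_sum]
  simp [mul_comm]

/-- The vector field `T_m(A_H[u]) g[u]`. -/
noncomputable def newtonField (D : CancellationSetting n) (m : ℕ)
    (g : Fin n → ((Fin n → ℝ) → ℝ) → (Fin n → ℝ) → ℝ) (u : (Fin n → ℝ) → ℝ) (j : Fin n)
    (y : Fin n → ℝ) : ℝ :=
  ∑ l, D.T m u y j l * g l u y

/-- A vector field `Z[u]` that is `C¹` in the point and whose size and divergence are both
`O((Δu + C₁)^(k-1))`. -/
structure IsTameField (D : CancellationSetting n)
    (Z : ((Fin n → ℝ) → ℝ) → Fin n → (Fin n → ℝ) → ℝ) : Prop where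
  contDiffOn : ∀ u, ContDiffOn ℝ 3 u D.Ω → ∀ j, ContDiffOn ℝ 1 (Z u j) D.Ω
  isOrder : ∀ j, D.IsOrder (D.κ + 1) fun s => Z s.u j s.x
  isOrder_div : D.IsOrder (D.κ + 1) fun s => ∑ j, pd j (Z s.u j) s.x

variable {g : Fin n → ((Fin n → ℝ) → ℝ) → (Fin n → ℝ) → ℝ}

lemma sum_pd_newtonField (hg : ∀ l, D.IsFirstOrder (g l)) (s : D.State) :
    ∑ j, pd j (D.newtonField m g s.u j) s.x =
      ∑ l, (∑ j, pd j (fun y => D.T m s.u y j l) s.x) * g l s.u s.x +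
        ∑ j, ∑ l, D.T m s.u s.x j l * pd j (g l s.u) s.x := by
  have hT (j l : Fin n) : DifferentiableAt ℝ (fun y => D.T m s.u y j l) s.x :=
    differentiableAt_of_contDiffOn D.isOpen_Ω (contDiffOn_T m s.adm.contDiffOn j l) one_ne_zero
      (mem_Ω s.mem)
  have hpd (j : Fin n) : pd j (D.newtonField m g s.u j) s.x =
      ∑ l, (pd j (fun y => D.T m s.u y j l) s.x * g l s.u s.x +
        D.T m s.u s.x j l * pd j (g l s.u) s.x) := by
    unfold newtonField
    rw [pd_sum fun l _ => (hT j l).fun_mul ((hg l).differentiableAt s)]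
    exact Finset.sum_congr rfl fun l _ => pd_mul (hT j l) ((hg l).differentiableAt s)
  simp only [hpd, Finset.sum_add_distrib, Finset.sum_mul]
  rw [Finset.sum_comm]

lemma isTameField_newtonField (hg : ∀ l, D.IsFirstOrder (g l)) (hm : m ≤ D.κ + 1)
    (htr : D.IsOrder (D.κ + 1) fun s => ∑ j, ∑ l, D.T m s.u s.x j l * pd j (g l s.u) s.x) :
    D.IsTameField (D.newtonField m g) where
  contDiffOn u hu j :=
    ContDiffOn.sum fun l _ => (contDiffOn_T m hu j l).mul ((hg l).contDiffOn u hu)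
  isOrder j := IsBigO.fun_sum fun l _ =>
    (isOrder_T (by linarith [D.κ_add_two_le]) j l).mul (hg l).isOrder hm
  isOrder_div := by
    simp only [sum_pd_newtonField hg]
    exact (IsBigO.fun_sum fun l _ => (isOrder_sum_pd_T (by linarith [D.κ_add_two_le]) l).mul
      (hg l).isOrder hm).add htr

lemma isTameField_newtonField_κ (hg : ∀ l, D.IsFirstOrder (g l)) :
    D.IsTameField (D.newtonField D.κ g) :=
  isTameField_newtonField hg (Nat.le_succ _) <| IsBigO.fun_sum fun j _ => IsBigO.fun_sum fun l _ =>
    (isOrder_T (by linarith [D.κ_add_two_le]) j l).mul ((hg l).isOrder_pd j) le_rfl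

-- Contracted with `T_{k-1}`, the Hessian gives `kσ_k`, which the equation bounds, instead of a
-- term of order `k`.
lemma isTameField_newtonField_gradient :
    D.IsTameField (D.newtonField (D.κ + 1) fun l u y => 2 * D.H₁ (y, u y) * pd l u y) := by
  have hκ := D.κ_add_two_le
  have hH : D.IsFirstOrder fun u y => 2 * D.H₁ (y, u y) := (IsFirstOrder.const 2).mul .H₁_comp
  refine isTameField_newtonField (fun l => hH.mul (.pd_u l)) le_rfl ?_
  have hsplit (s : D.State) : ∑ j, ∑ l, D.T (D.κ + 1) s.u s.x j l *
      pd j (fun y => 2 * D.H₁ (y, s.u y) * pd l s.u y) s.x =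
      ∑ j, ∑ l, D.T (D.κ + 1) s.u s.x j l *
        (2 * pd j (fun y => D.H₁ (y, s.u y)) s.x * pd l s.u s.x) +
      2 * D.H₁ (s.x, s.u s.x) * ((((D.κ + 1 : ℕ) : ℝ) + 1) * D.σ (D.κ + 2) s.u s.x +
        D.φ s.u s.x * ((n - (D.κ + 1 : ℕ)) * D.σ (D.κ + 1) s.u s.x)) := by
    rw [← sum_T_mul_pd_pd s.adm.contDiffOn (mem_Ω s.mem) hκ]
    simp only [pd_mul (hH.differentiableAt s) ((IsFirstOrder.pd_u _).differentiableAt s),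
      pd_const_mul 2 (IsFirstOrder.H₁_comp.differentiableAt s), mul_add, Finset.sum_add_distrib,
      Finset.mul_sum, mul_left_comm]
  simp only [hsplit]
  have hσ : D.IsOrder 0 fun s => D.σ (D.κ + 2) s.u s.x :=
    .of_abs_le fun s => s.adm.abs_σ_le s.x s.mem
  refine IsBigO.add (IsBigO.fun_sum fun j _ => IsBigO.fun_sum fun l _ => ?_) ?_
  · exact (isOrder_T (by omega) j l).mul
      (IsOrder.mul ((isOrder_pd_H₁_comp j).const_mul_left 2) (isOrder_pd l) le_rfl) le_rfl
  · refine hH.isOrder.mul (IsBigO.add ((IsOrder.const _).mul hσ (Nat.zero_le _)) ?_)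
      (zero_add _).le
    exact IsFirstOrder.φ.isOrder.mul ((isOrder_σ (by omega)).const_mul_left _) (zero_add _).le

end NewtonField

section Flux
variable {ρ : ℝ} {η : (Fin n → ℝ) → ℝ}

/-- A cutoff at scale `ρ`, supported in the ball of radius `R + 2ρ`. -/
structure IsCutoff (D : CancellationSetting n) (ρ : ℝ) (η : (Fin n → ℝ) → ℝ) : Prop where
  ρ_pos : 0 < ρ
  ρ_le : ρ ≤ D.R / 3
  contDiff : ContDiff ℝ 1 η
  eq_zero : ∀ x ∉ ball D.x₀ (D.R + 2 * ρ), η x = 0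
  nonneg : ∀ x, 0 ≤ η x
  le_one : ∀ x, η x ≤ 1
  vnorm_grad_le : ∀ x, vnorm (grad η x) ≤ D.c₀ / ρ

/-- The closed ball of radius `R + 2ρ`, over which everything is integrated. -/
def cutoffBall (D : CancellationSetting n) (ρ : ℝ) : Set (Fin n → ℝ) :=
  closedBall D.x₀ (D.R + 2 * ρ)

lemma isCompact_cutoffBall : IsCompact (D.cutoffBall ρ) :=
  isCompact_closedBall _ _

lemma IsCutoff.cutoffBall_subset (hη : D.IsCutoff ρ η) :
    D.cutoffBall ρ ⊆ ball D.x₀ (2 * D.R) :=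
  closedBall_subset_ball (by linarith [hη.ρ_le, D.R_pos])

/-- A coefficient `b[u]` that is bounded and Lipschitz on the large ball, uniformly in `u`. -/
def IsLipschitzCoeff (D : CancellationSetting n)
    (b : ((Fin n → ℝ) → ℝ) → (Fin n → ℝ) → ℝ) : Prop :=
  ∃ L B : NNReal, ∀ u C₁, D.IsAdmissible u C₁ → LipschitzOnWith L (b u) (ball D.x₀ (2 * D.R)) ∧
    ∀ x ∈ ball D.x₀ (2 * D.R), |b u x| ≤ B

lemma isLipschitzCoeff_one : D.IsLipschitzCoeff fun _ _ => 1 :=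
  ⟨0, 1, fun _ _ _ => ⟨(LipschitzWith.const 1).lipschitzOnWith, fun _ _ => by simp⟩⟩

lemma isLipschitzCoeff_of_isOrder {b : ((Fin n → ℝ) → ℝ) → (Fin n → ℝ) → ℝ}
    (hb : ∀ u, ContDiffOn ℝ 3 u D.Ω → ContDiffOn ℝ 1 (b u) D.Ω)
    (hb₀ : D.IsOrder 0 fun s => b s.u s.x) (hb₁ : ∀ j, D.IsOrder 0 fun s => pd j (b s.u) s.x) :
    D.IsLipschitzCoeff b := by
  obtain ⟨B, hB, hbB⟩ := hb₀.exists_abs_le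
  obtain ⟨L, hL, hbL⟩ := IsOrder.exists_abs_le (D := D) (m := 0)
    (IsBigO.fun_sum (s := Finset.univ) fun j _ => (hb₁ j).norm_left)
  simp only [pow_zero, mul_one] at hbB hbL
  refine ⟨(n : NNReal) * ⟨L, hL⟩, ⟨B, hB⟩, fun u C₁ hu => ⟨?_, fun x hx => hbB ⟨u, C₁, x, hu, hx⟩⟩⟩
  refine (convex_ball D.x₀ (2 * D.R)).lipschitzOnWith_of_nnnorm_fderiv_le (𝕜 := ℝ)
    (fun x hx => differentiableAt_of_contDiffOn D.isOpen_Ω (hb u hu.contDiffOn) one_ne_zero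
      (mem_Ω hx)) fun x hx => norm_fderiv_le_of_abs_pd_le hL fun j => ?_
  exact (Finset.single_le_sum (f := fun j => |pd j (b u) x|) (fun _ _ => abs_nonneg _)
    (Finset.mem_univ j)).trans ((le_abs_self _).trans (hbL ⟨u, C₁, x, hu, hx⟩))

lemma isLipschitzCoeff_u : D.IsLipschitzCoeff fun u => u :=
  isLipschitzCoeff_of_isOrder (fun _ hu => hu.of_le (by norm_num))
    (.of_abs_le fun s => s.adm.abs_apply_le s.mem) isOrder_pd

lemma isLipschitzCoeff_H₁_comp : D.IsLipschitzCoeff fun u y => D.H₁ (y, u y) :=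
  isLipschitzCoeff_of_isOrder (fun _ => contDiffOn_H₁_comp) IsFirstOrder.H₁_comp.isOrder
    isOrder_pd_H₁_comp

lemma isLipschitzCoeff_fderiv_H₁ {v : (Fin n → ℝ) × ℝ} (hv : ‖v‖ ≤ 1) :
    D.IsLipschitzCoeff fun u y => fderiv ℝ D.H₁ (y, u y) v := by
  obtain ⟨L, hL⟩ := D.exists_lipschitzOnWith_fderiv_H₁
  obtain ⟨C, hC⟩ := D.exists_norm_fderiv_H₁_le
  obtain ⟨K, _, hK⟩ := isLipschitzCoeff_u (D := D)
  refine ⟨L * max 1 K, C.toNNReal, fun u C₁ hu => ⟨?_, fun x hx =>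
    (abs_clm_apply_le_norm _ hv).trans <|
      (hC _ (hu.mem_graphBox hx)).trans (Real.le_coe_toNNReal C)⟩⟩
  have hgraph := LipschitzWith.id.lipschitzOnWith.prodMk (hK u C₁ hu).1
  have hcomp := hL.comp hgraph fun x hx => hu.mem_graphBox hx
  refine LipschitzOnWith.of_dist_le_mul fun x hx y hy => ?_
  refine le_trans ?_ (hcomp.dist_le_mul x hx y hy)
  rw [Real.dist_eq, dist_eq_norm, ← _root_.sub_apply]
  exact abs_clm_apply_le_norm _ hv

/-- The flux of `Y[u]` through a cutoff can be integrated by parts at the cost of a factor `1/ρ`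
and a power `(Δu + C₁)^(k-1)`. -/
structure HasFluxBound (D : CancellationSetting n)
    (Y : ((Fin n → ℝ) → ℝ) → Fin n → (Fin n → ℝ) → ℝ) : Prop where
  continuousOn : ∀ u C₁, D.IsAdmissible u C₁ → ∀ j, ContinuousOn (Y u j) (ball D.x₀ (2 * D.R))
  exists_le : ∃ C, 0 ≤ C ∧ ∀ u C₁ ρ η V O, D.IsAdmissible u C₁ → D.IsCutoff ρ η → IsOpen O →
    D.cutoffBall ρ ⊆ O → ContDiffOn ℝ 1 V O →
    |∫ x in D.cutoffBall ρ, η x * ∑ j, Y u j x * pd j V x| ≤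
      C / ρ * ∫ x in D.cutoffBall ρ, |V x| * weight u C₁ x ^ (D.κ + 1)

lemma continuousOn_weight (hu : ContDiffOn ℝ 3 u D.Ω) : ContinuousOn (weight u C₁) D.Ω :=
  (continuousOn_finsetSum _ fun l _ => (contDiffOn_pd (a := 1) D.isOpen_Ω (contDiffOn_pd (a := 2)
    D.isOpen_Ω hu (by norm_num) l) (by norm_num) l).continuousOn).add continuousOn_const

lemma IsCutoff.cutoffBall_subset_Ω (hη : D.IsCutoff ρ η) : D.cutoffBall ρ ⊆ D.Ω :=
  hη.cutoffBall_subset.trans fun _ => mem_Ω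

lemma IsCutoff.abs_sum_pd_mul_le (hη : D.IsCutoff ρ η) {Z : Fin n → (Fin n → ℝ) → ℝ}
    (hZ : ∀ j, DifferentiableAt ℝ (Z j) x) :
    |∑ j, pd j (fun y => η y * Z j y) x| ≤ D.c₀ / ρ * ∑ j, |Z j x| + |∑ j, pd j (Z j) x| := by
  have hpd (j : Fin n) : pd j (fun y => η y * Z j y) x = pd j η x * Z j x + η x * pd j (Z j) x :=
    pd_mul (hη.contDiff.differentiable one_ne_zero x) (hZ j)
  simp only [hpd, Finset.sum_add_distrib, ← Finset.mul_sum]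
  refine (abs_add_le _ _).trans (add_le_add ?_ ?_)
  · rw [Finset.mul_sum]
    refine (Finset.abs_sum_le_sum_abs _ _).trans (Finset.sum_le_sum fun j _ => ?_)
    rw [abs_mul]
    exact mul_le_mul_of_nonneg_right
      ((abs_apply_le_vnorm (grad η x) j).trans (hη.vnorm_grad_le x)) (abs_nonneg _)
  · rw [abs_mul, abs_of_nonneg (hη.nonneg x)]
    exact mul_le_of_le_one_left (abs_nonneg _) (hη.le_one x)

variable {Z : ((Fin n → ℝ) → ℝ) → Fin n → (Fin n → ℝ) → ℝ}

lemma IsTameField.exists_cutoff_bound (hZ : D.IsTameField Z) (L B : NNReal) :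
    ∃ C, 0 ≤ C ∧ ∀ u C₁ ρ η, D.IsAdmissible u C₁ → D.IsCutoff ρ η →
      ∀ x ∈ ball D.x₀ (2 * D.R),
        L * ∑ j, |η x * Z u j x| + B * |∑ j, pd j (fun y => η y * Z u j y) x| ≤
          C / ρ * weight u C₁ x ^ (D.κ + 1) := by
  obtain ⟨S, hS, hSZ⟩ := IsOrder.exists_abs_le (D := D) (m := D.κ + 1)
    (IsBigO.fun_sum (s := Finset.univ) fun j _ => (hZ.isOrder j).norm_left)
  obtain ⟨S', hS', hSZ'⟩ := hZ.isOrder_div.exists_abs_le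
  have hR := D.R_pos
  have hc₀ := D.c₀_nonneg
  refine ⟨L * S * D.R + B * (D.c₀ * S + S' * D.R), by positivity, fun u C₁ ρ η hu hη x hx => ?_⟩
  have hρ := hη.ρ_pos
  have hW := hu.one_le_weight x hx
  have hZx : ∑ j, |Z u j x| ≤ S * weight u C₁ x ^ (D.κ + 1) :=
    (le_abs_self _).trans (hSZ ⟨u, C₁, x, hu, hx⟩)
  have hηZx : ∑ j, |η x * Z u j x| ≤ ∑ j, |Z u j x| := Finset.sum_le_sum fun j _ => by
    rw [abs_mul, abs_of_nonneg (hη.nonneg x)]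
    exact mul_le_of_le_one_left (abs_nonneg _) (hη.le_one x)
  calc _ ≤ L * (S * weight u C₁ x ^ (D.κ + 1)) + B * (D.c₀ / ρ * (S * weight u C₁ x ^ (D.κ + 1)) +
        S' * weight u C₁ x ^ (D.κ + 1)) := by
        gcongr
        · exact hηZx.trans hZx
        · refine (hη.abs_sum_pd_mul_le fun j => differentiableAt_of_contDiffOn D.isOpen_Ω
            (hZ.contDiffOn u hu.contDiffOn j) one_ne_zero (mem_Ω hx)).trans ?_
          gcongr
          exact hSZ' ⟨u, C₁, x, hu, hx⟩
    _ = (L * S * ρ + B * (D.c₀ * S + S' * ρ)) / ρ * weight u C₁ x ^ (D.κ + 1) := by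
        field_simp
    _ ≤ _ := by
        have := hη.ρ_le
        gcongr <;> linarith

lemma IsTameField.hasFluxBound_mul {b : ((Fin n → ℝ) → ℝ) → (Fin n → ℝ) → ℝ}
    (hZ : D.IsTameField Z) (hb : D.IsLipschitzCoeff b) :
    D.HasFluxBound fun u j y => b u y * Z u j y := by
  obtain ⟨L, B, hLB⟩ := hb
  obtain ⟨C, hC, hbound⟩ := hZ.exists_cutoff_bound L B
  refine ⟨fun u C₁ hu j => (hLB u C₁ hu).1.continuousOn.mul
    ((hZ.contDiffOn u hu.contDiffOn j).continuousOn.mono fun _ => mem_Ω), C, hC,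
    fun u C₁ ρ η V O hu hη hO hKO hV => ?_⟩
  have hparts := abs_setIntegral_mul_sum_mul_pd_le isCompact_cutoffBall (hO.inter D.isOpen_Ω)
    (subset_inter hKO hη.cutoffBall_subset_Ω) (hV.mono inter_subset_left)
    (fun j => hη.contDiff.contDiffOn.mul
      ((hZ.contDiffOn u hu.contDiffOn j).mono inter_subset_right))
    (fun j y hy => by rw [hη.eq_zero y fun h => hy (ball_subset_closedBall h), zero_mul])
    ((hLB u C₁ hu).1.mono hη.cutoffBall_subset)
    (fun y hy => (hLB u C₁ hu).2 y (hη.cutoffBall_subset hy))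
  have hint : IntegrableOn (fun y => |V y| * weight u C₁ y ^ (D.κ + 1)) (D.cutoffBall ρ) :=
    ((hV.continuousOn.mono hKO).abs.mul (((continuousOn_weight hu.contDiffOn).mono
      hη.cutoffBall_subset_Ω).pow _)).integrableOn_compact isCompact_cutoffBall
  calc |∫ y in D.cutoffBall ρ, η y * ∑ j, b u y * Z u j y * pd j V y|
      = |∫ y in D.cutoffBall ρ, b u y * ∑ j, η y * Z u j y * pd j V y| := by
        simp only [Finset.mul_sum, mul_assoc, mul_left_comm]
    _ ≤ _ := hparts
    _ ≤ ∫ y in D.cutoffBall ρ, C / ρ * (|V y| * weight u C₁ y ^ (D.κ + 1)) :=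
        integral_mono_of_nonneg (ae_of_all _ fun y => by positivity) (hint.const_mul _) <|
          (ae_restrict_mem isCompact_cutoffBall.measurableSet).mono fun y hy => by
            refine (mul_le_mul_of_nonneg_left (hbound u C₁ ρ η hu hη y
              (hη.cutoffBall_subset hy)) (abs_nonneg _)).trans_eq (mul_left_comm _ _ _)
    _ = _ := integral_const_mul _ _

lemma HasFluxBound.add {Y Y' : ((Fin n → ℝ) → ℝ) → Fin n → (Fin n → ℝ) → ℝ}
    (hY : D.HasFluxBound Y) (hY' : D.HasFluxBound Y') :
    D.HasFluxBound fun u j y => Y u j y + Y' u j y := by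
  obtain ⟨C, hC, hYC⟩ := hY.exists_le
  obtain ⟨C', hC', hYC'⟩ := hY'.exists_le
  refine ⟨fun u C₁ hu j => (hY.continuousOn u C₁ hu j).add (hY'.continuousOn u C₁ hu j),
    C + C', add_nonneg hC hC', fun u C₁ ρ η V O hu hη hO hKO hV => ?_⟩
  have hint {Y : Fin n → (Fin n → ℝ) → ℝ}
      (hY : ∀ j, ContinuousOn (Y j) (ball D.x₀ (2 * D.R))) :
      IntegrableOn (fun y => η y * ∑ j, Y j y * pd j V y) (D.cutoffBall ρ) :=
    (hη.contDiff.continuous.continuousOn.mul (continuousOn_finsetSum _ fun j _ =>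
      ((hY j).mono hη.cutoffBall_subset).mul
        (continuousOn_pd hO hKO hV j))).integrableOn_compact isCompact_cutoffBall
  simp only [add_mul, Finset.sum_add_distrib, mul_add, add_div]
  rw [integral_add (hint (hY.continuousOn u C₁ hu)) (hint (hY'.continuousOn u C₁ hu))]
  exact (abs_add_le _ _).trans
    (add_le_add (hYC u C₁ ρ η V O hu hη hO hKO hV) (hYC' u C₁ ρ η V O hu hη hO hKO hV))

lemma HasFluxBound.sum {ι : Type*} (S : Finset ι)
    {Y : ι → ((Fin n → ℝ) → ℝ) → Fin n → (Fin n → ℝ) → ℝ}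
    (hY : ∀ i, D.HasFluxBound (Y i)) : D.HasFluxBound fun u j y => ∑ i ∈ S, Y i u j y := by
  classical
  induction S using Finset.induction_on with
  | empty => exact ⟨fun _ _ _ _ => by simpa using continuousOn_const, 0, le_rfl, by simp⟩
  | insert i S hi ih => simpa only [Finset.sum_insert hi] using (hY i).add ih

end Flux

/-! ### The divergence of `T_{k-1}` -/

/-- The part of `(n-k+1)⁻¹ Σ_i ∂_i T_{k-1}^{ij}` that involves no bare second derivative of `u`. -/
noncomputable def flux (D : CancellationSetting n) (u : (Fin n → ℝ) → ℝ) (j : Fin n)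
    (y : Fin n → ℝ) : ℝ :=
  1 * D.newtonField (D.κ + 1) (fun l u y => 2 * D.H₁ (y, u y) * pd l u y) u j y +
    1 * D.newtonField D.κ (fun l u y => -2 * D.H₁ (y, u y) * D.φ u y * pd l u y) u j y +
    fderiv ℝ D.H₁ (y, u y) (0, 1) *
      D.newtonField D.κ (fun l u y => -1 * normSq (grad u y) * pd l u y) u j y +
    ∑ i, fderiv ℝ D.H₁ (y, u y) (Pi.single i 1, 0) *
      D.newtonField D.κ (fun l u y => normSq (grad u y) * (Pi.single i (-1) : Fin n → ℝ) l) u j y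

lemma hasFluxBound_flux : D.HasFluxBound D.flux :=
  (((isTameField_newtonField_gradient.hasFluxBound_mul isLipschitzCoeff_one).add
    ((isTameField_newtonField_κ fun _ => (((IsFirstOrder.const (-2)).mul .H₁_comp).mul .φ).mul
      (.pd_u _)).hasFluxBound_mul isLipschitzCoeff_one)).add
    ((isTameField_newtonField_κ fun _ => ((IsFirstOrder.const (-1)).mul .normSq_grad).mul
      (.pd_u _)).hasFluxBound_mul (isLipschitzCoeff_fderiv_H₁ norm_zero_one_le_one))).add
    (HasFluxBound.sum _ fun i =>
      (isTameField_newtonField_κ fun _ => IsFirstOrder.normSq_grad.mul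
        (.const _)).hasFluxBound_mul (isLipschitzCoeff_fderiv_H₁ (norm_single_zero_le_one i)))

lemma pd_φ (hu : ContDiffOn ℝ 3 u D.Ω) (hx : x ∈ D.Ω) (i : Fin n) :
    pd i (D.φ u) x = (fderiv ℝ D.H₁ (x, u x) (Pi.single i 1, 0) +
      fderiv ℝ D.H₁ (x, u x) (0, 1) * pd i u x) * normSq (grad u x) +
      D.H₁ (x, u x) * (2 * ∑ l, pd l u x * pd i (pd l u) x) := by
  have hdpd (l : Fin n) : DifferentiableAt ℝ (pd l u) x := differentiableAt_of_contDiffOn (b := 1)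
    D.isOpen_Ω (contDiffOn_pd D.isOpen_Ω hu (by norm_num) l) one_ne_zero hx
  unfold φ
  rw [pd_mul (differentiableAt_of_contDiffOn D.isOpen_Ω (contDiffOn_H₁_comp hu) one_ne_zero hx)
    (differentiableAt_of_contDiffOn (b := 1) D.isOpen_Ω (contDiffOn_normSq_grad D.isOpen_Ω hu
      (by norm_num)) one_ne_zero hx), pd_H₁_comp hu hx, pd_normSq_grad hdpd]
  simp only [mul_assoc, Finset.mul_sum]

lemma isSymm_T (hu : ContDiffOn ℝ 3 u D.Ω) (hx : x ∈ D.Ω) (m : ℕ) : (D.T m u x).IsSymm :=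
  isSymm_newtonT (isSymm_augHess D.isOpen_Ω (hu.of_le (by norm_num)) hx) m

lemma sum_T_mul_pd_pd_eq (hu : ContDiffOn ℝ 3 u D.Ω) (hx : x ∈ D.Ω) {m : ℕ} (j l : Fin n) :
    ∑ i, D.T m u x i j * pd i (pd l u) x =
      D.σ (m + 1) u x * (1 : Matrix (Fin n) (Fin n) ℝ) j l - D.T (m + 1) u x j l +
        D.φ u x * D.T m u x j l := by
  have hT (i : Fin n) : D.T m u x i j = D.T m u x j i := (isSymm_T hu hx m).apply j i
  have hpd (i : Fin n) : pd i (pd l u) x =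
      augHess u (D.φ u) x i l + D.φ u x * (1 : Matrix (Fin n) (Fin n) ℝ) i l := by
    rw [augHess_apply, sub_add_cancel]
  have hsucc : ∑ i, D.T m u x j i * augHess u (D.φ u) x i l =
      D.σ (m + 1) u x * (1 : Matrix (Fin n) (Fin n) ℝ) j l - D.T (m + 1) u x j l := by
    simp [T, σ, newtonT, Matrix.mul_apply]
  simp only [hT, hpd, mul_add, Finset.sum_add_distrib, hsucc]
  simp [Matrix.one_apply, mul_comm]

lemma sum_pd_T_eq_flux (hu : ContDiffOn ℝ 3 u D.Ω) (hx : x ∈ D.Ω) (j : Fin n) :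
    ∑ i, pd i (fun y => D.T (D.κ + 1) u y i j) x =
      ((n : ℝ) - (D.κ + 1)) *
        (D.flux u j x - 2 * D.H₁ (x, u x) * D.σ (D.κ + 1) u x * pd j u x) := by
  have hT (i : Fin n) : D.T D.κ u x i j = D.T D.κ u x j i := (isSymm_T hu hx _).apply j i
  have hhess : ∑ i, D.T D.κ u x i j * ∑ l, pd l u x * pd i (pd l u) x =
      D.σ (D.κ + 1) u x * pd j u x - ∑ l, D.T (D.κ + 1) u x j l * pd l u x +
        D.φ u x * ∑ l, D.T D.κ u x j l * pd l u x := by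
    simp only [Finset.mul_sum, mul_left_comm _ (pd _ u x)]
    rw [Finset.sum_comm]
    simp only [← Finset.mul_sum, sum_T_mul_pd_pd_eq hu hx]
    simp only [mul_add, mul_sub, Finset.sum_add_distrib, Finset.sum_sub_distrib, Finset.mul_sum]
    simp [Matrix.one_apply, mul_comm, mul_left_comm]
  rw [sum_pd_T hu hx (by linarith [D.κ_add_two_le])]
  have hgrad : ∑ i, D.T D.κ u x i j * pd i (D.φ u) x =
      normSq (grad u x) * ∑ i, fderiv ℝ D.H₁ (x, u x) (Pi.single i 1, 0) * D.T D.κ u x j i +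
        normSq (grad u x) * fderiv ℝ D.H₁ (x, u x) (0, 1) * ∑ i, D.T D.κ u x j i * pd i u x +
        2 * D.H₁ (x, u x) * ∑ i, D.T D.κ u x i j * ∑ l, pd l u x * pd i (pd l u) x := by
    simp only [pd_φ hu hx, hT, Finset.mul_sum (Finset.univ) _ (normSq (grad u x)),
      Finset.mul_sum (Finset.univ) _ (normSq (grad u x) * _),
      Finset.mul_sum (Finset.univ) _ (2 * D.H₁ (x, u x)), ← Finset.sum_add_distrib]
    exact Finset.sum_congr rfl fun i _ => by ring
  have hflux : D.flux u j x =
      2 * D.H₁ (x, u x) * ∑ l, D.T (D.κ + 1) u x j l * pd l u x -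
        2 * D.H₁ (x, u x) * D.φ u x * ∑ l, D.T D.κ u x j l * pd l u x -
        normSq (grad u x) * fderiv ℝ D.H₁ (x, u x) (0, 1) * ∑ l, D.T D.κ u x j l * pd l u x -
        normSq (grad u x) * ∑ i, fderiv ℝ D.H₁ (x, u x) (Pi.single i 1, 0) * D.T D.κ u x j i := by
    simp only [flux, newtonField, Pi.single_apply, Finset.mul_sum]
    simp [sub_eq_add_neg, mul_comm, mul_left_comm, mul_assoc]
  rw [hflux, hgrad, hhess]
  ring

/-! ### Second differences of `H₁(x,u)|∇u|²` -/

section SecondDifferences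
variable {l : Fin n} {h : ℝ}

lemma ddq_mul (a b : (Fin n → ℝ) → ℝ) :
    ddq l h (fun y => a y * b y) x = a x * ddq l h b x + b x * ddq l h a x +
      dq l h a x * dq l h b x + dq l (-h) a x * dq l (-h) b x := by
  simp only [ddq, dq, neg_smul, ← sub_eq_add_neg]
  ring

lemma ddq_sum {ι : Type*} (S : Finset ι) (a : ι → (Fin n → ℝ) → ℝ) :
    ddq l h (fun y => ∑ i ∈ S, a i y) x = ∑ i ∈ S, ddq l h (a i) x := by
  simp only [ddq, ← Finset.sum_div, Finset.sum_add_distrib, Finset.sum_sub_distrib,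
    Finset.mul_sum]

lemma ddq_mul_const (a : (Fin n → ℝ) → ℝ) (c : ℝ) :
    ddq l h (fun y => a y * c) x = ddq l h a x * c := by
  simp only [ddq]
  ring

lemma two_mul_sum_mul_ddq_le_ddq_normSq_grad :
    2 * ∑ i, pd i u x * ddq l h (pd i u) x ≤ ddq l h (fun y => normSq (grad u y)) x := by
  simp only [normSq, grad, ddq_sum, pow_two, ddq_mul, Finset.mul_sum]
  refine Finset.sum_le_sum fun i _ => ?_
  linarith [mul_self_nonneg (dq l h (pd i u) x), mul_self_nonneg (dq l (-h) (pd i u) x)]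

lemma abs_second_diff_le {a a' : ℝ → ℝ} {E : ℝ} (ha : ∀ s ∈ Icc (-1 : ℝ) 1, HasDerivAt a (a' s) s)
    (hE : ∀ s ∈ Icc (-1 : ℝ) 1, |a' s - a' (-s)| ≤ E) : |a 1 - 2 * a 0 + a (-1)| ≤ E := by
  have hsub : Icc (0 : ℝ) 1 ⊆ Icc (-1) 1 := Icc_subset_Icc (by norm_num) le_rfl
  have hderiv : ∀ s ∈ Icc (0 : ℝ) 1,
      HasDerivWithinAt (fun s => a s + a (-s)) (a' s - a' (-s)) (Icc 0 1) s := fun s hs => by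
    have hneg := (ha (-s) ⟨neg_le_neg hs.2, by linarith [hs.1]⟩).scomp s (hasDerivAt_neg s)
    simpa [sub_eq_add_neg, Function.comp_def] using
      ((ha s (hsub hs)).fun_add hneg).hasDerivWithinAt
  have hmean := (convex_Icc (0 : ℝ) 1).norm_image_sub_le_of_norm_hasDerivWithin_le hderiv
    (fun s hs => hE s (hsub hs)) (left_mem_Icc.2 zero_le_one) (right_mem_Icc.2 zero_le_one)
  convert hmean using 1
  · rw [Real.norm_eq_abs]
    ring_nf
  · simp

end SecondDifferences

/-- A segment `[x - he_l, x + he_l]` inside the large ball, for an admissible function `u`. -/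
structure Segment (D : CancellationSetting n) (l : Fin n) where
  u : (Fin n → ℝ) → ℝ
  C₁ : ℝ
  x : Fin n → ℝ
  h : ℝ
  h_ne_zero : h ≠ 0
  adm : D.IsAdmissible u C₁
  mem : ∀ s ∈ Icc (-1 : ℝ) 1, x + (s * h) • (Pi.single l 1 : Fin n → ℝ) ∈ ball D.x₀ (2 * D.R)

namespace Segment
variable {l : Fin n} (S : D.Segment l) {s t : ℝ}

/-- The affine parametrisation of the segment by `[-1, 1]`. -/
def point (s : ℝ) : Fin n → ℝ :=
  S.x + (s * S.h) • (Pi.single l 1 : Fin n → ℝ)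

/-- The integral of the weight `Δu + C₁` in this parametrisation. -/
noncomputable def mass : ℝ :=
  ∫ s in (-1 : ℝ)..1, weight S.u S.C₁ (S.point s)

lemma point_zero : S.point 0 = S.x := by
  simp [point]

lemma point_mem_ball (hs : s ∈ Icc (-1 : ℝ) 1) : S.point s ∈ ball D.x₀ (2 * D.R) :=
  S.mem s hs

lemma point_mem_Ω (hs : s ∈ Icc (-1 : ℝ) 1) : S.point s ∈ D.Ω :=
  mem_Ω (S.point_mem_ball hs)

lemma x_mem_Ω : S.x ∈ D.Ω :=
  S.point_zero ▸ S.point_mem_Ω (by norm_num)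

lemma dist_point_le (hs : s ∈ Icc (-1 : ℝ) 1) (ht : t ∈ Icc (-1 : ℝ) 1) :
    dist (S.point t) (S.point s) ≤ 2 * |S.h| := by
  rw [dist_eq_norm, point, point, add_sub_add_left_eq_sub, ← sub_smul, norm_smul, Pi.norm_single,
    norm_one, mul_one, ← sub_mul, norm_mul, Real.norm_eq_abs, Real.norm_eq_abs]
  gcongr
  rw [abs_le]
  constructor <;> linarith [hs.1, hs.2, ht.1, ht.2]

lemma continuous_point : Continuous S.point := by
  unfold point
  fun_prop

lemma hasDerivAt_comp_point {w : (Fin n → ℝ) → ℝ} (hw : DifferentiableAt ℝ w (S.point s)) :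
    HasDerivAt (fun s => w (S.point s)) (S.h * pd l w (S.point s)) s := by
  have hpoint : HasDerivAt S.point (S.h • (Pi.single l 1 : Fin n → ℝ)) s := by
    unfold point
    simpa using (((hasDerivAt_id s).mul_const S.h).smul_const
      (Pi.single l 1 : Fin n → ℝ)).const_add S.x
  simpa only [map_smul, smul_eq_mul, pd, Function.comp_def] using
    hw.hasFDerivAt.comp_hasDerivAt s hpoint

lemma continuousOn_comp_point {w : (Fin n → ℝ) → ℝ} (hw : ContinuousOn w D.Ω) :
    ContinuousOn (fun s => w (S.point s)) (Icc (-1) 1) :=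
  hw.comp S.continuous_point.continuousOn fun _ hs => S.point_mem_Ω hs

lemma one_le_weight (hs : s ∈ Icc (-1 : ℝ) 1) : 1 ≤ weight S.u S.C₁ (S.point s) :=
  S.adm.one_le_weight _ (S.point_mem_ball hs)

lemma intervalIntegrable_weight :
    IntervalIntegrable (fun s => weight S.u S.C₁ (S.point s)) volume (-1) 1 :=
  (S.continuousOn_comp_point (continuousOn_weight S.adm.contDiffOn)).intervalIntegrable_of_Icc
    (by norm_num)

lemma one_le_mass : 1 ≤ S.mass := by
  have hmono := intervalIntegral.integral_mono_on (by norm_num : (-1 : ℝ) ≤ 1)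
    (intervalIntegrable_const (c := (1 : ℝ))) S.intervalIntegrable_weight
    fun _ hs => S.one_le_weight hs
  rw [intervalIntegral.integral_const, smul_eq_mul] at hmono
  exact le_trans (by norm_num) hmono

lemma abs_sub_le_mass {w : (Fin n → ℝ) → ℝ} {C : ℝ} (hw : ContDiffOn ℝ 1 w D.Ω)
    (hC : ∀ y ∈ ball D.x₀ (2 * D.R), |pd l w y| ≤ C * weight S.u S.C₁ y)
    (hs : s ∈ Icc (-1 : ℝ) 1) (ht : t ∈ Icc (-1 : ℝ) 1) :
    |w (S.point t) - w (S.point s)| ≤ C * (|S.h| * S.mass) := by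
  wlog hst : s ≤ t generalizing s t
  · rw [abs_sub_comm]
    exact this ht hs (le_of_not_ge hst)
  have hsub : Icc s t ⊆ Icc (-1) 1 := Icc_subset_Icc hs.1 ht.2
  have hderiv : ContinuousOn (fun r => S.h * pd l w (S.point r)) (Icc (-1) 1) :=
    continuousOn_const.mul (S.continuousOn_comp_point
      (contDiffOn_pd (a := 0) D.isOpen_Ω hw (by norm_num) l).continuousOn)
  have hbound (r : ℝ) (hr : r ∈ Icc (-1 : ℝ) 1) :
      |S.h * pd l w (S.point r)| ≤ C * |S.h| * weight S.u S.C₁ (S.point r) := by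
    rw [abs_mul, mul_comm C, mul_assoc]
    exact mul_le_mul_of_nonneg_left (hC _ (S.point_mem_ball hr)) (abs_nonneg _)
  have hint := S.intervalIntegrable_weight.const_mul (C * |S.h|)
  have hftc : ∫ r in s..t, S.h * pd l w (S.point r) = w (S.point t) - w (S.point s) := by
    refine intervalIntegral.integral_eq_sub_of_hasDerivAt (f := fun r => w (S.point r))
      (fun r hr => ?_)
      ((hderiv.mono hsub).intervalIntegrable_of_Icc hst)
    rw [uIcc_of_le hst] at hr
    exact S.hasDerivAt_comp_point (differentiableAt_of_contDiffOn D.isOpen_Ω hw one_ne_zero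
      (S.point_mem_Ω (hsub hr)))
  have hnonneg : ∀ r ∈ Icc (-1 : ℝ) 1, 0 ≤ C * |S.h| * weight S.u S.C₁ (S.point r) :=
    fun r hr => (abs_nonneg _).trans (hbound r hr)
  calc |w (S.point t) - w (S.point s)| ≤ ∫ r in s..t, |S.h * pd l w (S.point r)| :=
        hftc ▸ intervalIntegral.abs_integral_le_integral_abs hst
    _ ≤ ∫ r in s..t, C * |S.h| * weight S.u S.C₁ (S.point r) :=
        intervalIntegral.integral_mono_on hst
          ((hderiv.mono hsub).abs.intervalIntegrable_of_Icc hst)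
          (hint.mono_set (by simpa [uIcc_of_le hst] using hsub)) fun r hr => hbound r (hsub hr)
    _ ≤ ∫ r in (-1 : ℝ)..1, C * |S.h| * weight S.u S.C₁ (S.point r) :=
        intervalIntegral.integral_mono_interval hs.1 hst ht.2
          ((ae_restrict_mem measurableSet_Ioc).mono fun r hr =>
            hnonneg r (Ioc_subset_Icc_self hr)) hint
    _ = C * (|S.h| * S.mass) := by
        rw [intervalIntegral.integral_const_mul, mul_assoc, mass]

end Segment

/-- On every segment `c[u]` is bounded and oscillates by at most a multiple of `|h| ∫ (Δu + C₁)`,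
uniformly in `u`. -/
def HasIncrementBound (D : CancellationSetting n) (l : Fin n)
    (c : ((Fin n → ℝ) → ℝ) → (Fin n → ℝ) → ℝ) : Prop :=
  ∃ C, 0 ≤ C ∧ ∀ S : D.Segment l, ∀ s ∈ Icc (-1 : ℝ) 1, |c S.u (S.point s)| ≤ C ∧
    ∀ t ∈ Icc (-1 : ℝ) 1, |c S.u (S.point t) - c S.u (S.point s)| ≤ C * (|S.h| * S.mass)

section HasIncrementBound
variable {l : Fin n} {c d : ((Fin n → ℝ) → ℝ) → (Fin n → ℝ) → ℝ}

lemma IsFirstOrder.hasIncrementBound (hc : D.IsFirstOrder c) : D.HasIncrementBound l c := by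
  obtain ⟨B, hB, hcB⟩ := hc.isOrder.exists_abs_le
  obtain ⟨B', hB', hcB'⟩ := (hc.isOrder_pd l).exists_abs_le
  refine ⟨B + B', add_nonneg hB hB', fun S s hs => ⟨?_, fun t ht => ?_⟩⟩
  · have hbound := hcB ⟨S.u, S.C₁, S.point s, S.adm, S.point_mem_ball hs⟩
    rw [pow_zero, mul_one] at hbound
    exact hbound.trans (le_add_of_nonneg_right hB')
  · refine S.abs_sub_le_mass (hc.contDiffOn S.u S.adm.contDiffOn) (fun y hy => ?_) hs ht
    have hbound := hcB' ⟨S.u, S.C₁, y, S.adm, hy⟩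
    rw [pow_one] at hbound
    exact hbound.trans (mul_le_mul_of_nonneg_right (le_add_of_nonneg_left hB)
      (zero_le_one.trans (S.adm.one_le_weight y hy)))

lemma IsLipschitzCoeff.hasIncrementBound (hc : D.IsLipschitzCoeff c) :
    D.HasIncrementBound l c := by
  obtain ⟨L, B, hLB⟩ := hc
  refine ⟨B + L * 2, by positivity, fun S s hs => ⟨?_, fun t ht => ?_⟩⟩
  · exact ((hLB _ _ S.adm).2 _ (S.point_mem_ball hs)).trans (le_add_of_nonneg_right (by positivity))
  · have hmass := S.one_le_mass
    calc |c S.u (S.point t) - c S.u (S.point s)| ≤ L * dist (S.point t) (S.point s) :=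
          (hLB _ _ S.adm).1.dist_le_mul _ (S.point_mem_ball ht) _ (S.point_mem_ball hs)
      _ ≤ L * 2 * (|S.h| * 1) := by
          rw [mul_one, mul_assoc]
          exact mul_le_mul_of_nonneg_left (S.dist_point_le hs ht) L.2
      _ ≤ (B + L * 2) * (|S.h| * S.mass) := by
          gcongr
          exact le_add_of_nonneg_left B.2

lemma HasIncrementBound.add (hc : D.HasIncrementBound l c) (hd : D.HasIncrementBound l d) :
    D.HasIncrementBound l fun u y => c u y + d u y := by
  obtain ⟨B, hB, hcB⟩ := hc
  obtain ⟨B', hB', hdB⟩ := hd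
  refine ⟨B + B', add_nonneg hB hB', fun S s hs => ⟨?_, fun t ht => ?_⟩⟩
  · exact (abs_add_le _ _).trans (add_le_add (hcB S s hs).1 (hdB S s hs).1)
  · rw [add_sub_add_comm, add_mul]
    exact (abs_add_le _ _).trans (add_le_add ((hcB S s hs).2 t ht) ((hdB S s hs).2 t ht))

lemma HasIncrementBound.mul (hc : D.HasIncrementBound l c) (hd : D.HasIncrementBound l d) :
    D.HasIncrementBound l fun u y => c u y * d u y := by
  obtain ⟨B, hB, hcB⟩ := hc
  obtain ⟨B', hB', hdB⟩ := hd
  refine ⟨2 * (B * B'), by positivity, fun S s hs => ⟨?_, fun t ht => ?_⟩⟩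
  · rw [abs_mul]
    exact (mul_le_mul (hcB S s hs).1 (hdB S s hs).1 (abs_nonneg _) hB).trans
      (le_mul_of_one_le_left (mul_nonneg hB hB') one_le_two)
  · have hsplit : c S.u (S.point t) * d S.u (S.point t) - c S.u (S.point s) * d S.u (S.point s) =
        c S.u (S.point t) * (d S.u (S.point t) - d S.u (S.point s)) +
          (c S.u (S.point t) - c S.u (S.point s)) * d S.u (S.point s) := by ring
    have hmass := S.one_le_mass
    calc _ ≤ B * (B' * (|S.h| * S.mass)) + B * (|S.h| * S.mass) * B' := by
          rw [hsplit]
          refine (abs_add_le _ _).trans ?_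
          rw [abs_mul, abs_mul]
          gcongr
          exacts [(hcB S t ht).1, (hdB S s hs).2 t ht, (hcB S s hs).2 t ht, (hdB S s hs).1]
      _ = _ := by ring

lemma Segment.dq_eq (S : D.Segment l) (w : (Fin n → ℝ) → ℝ) :
    dq l S.h w S.x = (w (S.point 1) - w (S.point 0)) / S.h := by
  simp [dq, Segment.point]

lemma Segment.dq_neg_eq (S : D.Segment l) (w : (Fin n → ℝ) → ℝ) :
    dq l (-S.h) w S.x = (w (S.point (-1)) - w (S.point 0)) / -S.h := by
  simp [dq, Segment.point]

lemma Segment.ddq_eq (S : D.Segment l) (w : (Fin n → ℝ) → ℝ) :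
    ddq l S.h w S.x = (w (S.point 1) - 2 * w (S.point 0) + w (S.point (-1))) / S.h ^ 2 := by
  simp [ddq, Segment.point, sub_eq_add_neg]

lemma hasIncrementBound_pd_H₁_comp :
    D.HasIncrementBound l fun u y => fderiv ℝ D.H₁ (y, u y) (Pi.single l 1, 0) +
      fderiv ℝ D.H₁ (y, u y) (0, 1) * pd l u y :=
  (isLipschitzCoeff_fderiv_H₁ (norm_single_zero_le_one l)).hasIncrementBound.add
    ((isLipschitzCoeff_fderiv_H₁ norm_zero_one_le_one).hasIncrementBound.mul
      (IsFirstOrder.pd_u l).hasIncrementBound)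

lemma IsLipschitzCoeff.exists_abs_dq_le (hc : D.IsLipschitzCoeff c) :
    ∃ C, 0 ≤ C ∧ ∀ S : D.Segment l,
      |dq l S.h (c S.u) S.x| ≤ C ∧ |dq l (-S.h) (c S.u) S.x| ≤ C := by
  obtain ⟨L, _, hL⟩ := hc
  refine ⟨L * 2, by positivity, fun S => ?_⟩
  have hh : 0 < |S.h| := abs_pos.2 S.h_ne_zero
  have hincr (t : ℝ) (ht : t ∈ Icc (-1 : ℝ) 1) :
      |c S.u (S.point t) - c S.u (S.point 0)| ≤ L * 2 * |S.h| := by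
    have h0 : (0 : ℝ) ∈ Icc (-1 : ℝ) 1 := by norm_num
    rw [mul_assoc]
    exact ((hL _ _ S.adm).1.dist_le_mul _ (S.point_mem_ball ht) _ (S.point_mem_ball h0)).trans
      (mul_le_mul_of_nonneg_left (S.dist_point_le h0 ht) L.2)
  rw [S.dq_eq, S.dq_neg_eq, abs_div, abs_div, abs_neg, div_le_iff₀ hh, div_le_iff₀ hh]
  exact ⟨hincr 1 (by norm_num), hincr (-1) (by norm_num)⟩

lemma HasIncrementBound.exists_abs_dq_le (hc : D.HasIncrementBound l c) :
    ∃ C, 0 ≤ C ∧ ∀ S : D.Segment l, |c S.u S.x| ≤ C ∧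
      |dq l S.h (c S.u) S.x| ≤ C * S.mass ∧ |dq l (-S.h) (c S.u) S.x| ≤ C * S.mass := by
  obtain ⟨C, hC, hcC⟩ := hc
  refine ⟨C, hC, fun S => ?_⟩
  have hh : 0 < |S.h| := abs_pos.2 S.h_ne_zero
  have hS := hcC S 0 (by norm_num)
  rw [S.dq_eq, S.dq_neg_eq, abs_div, abs_div, abs_neg, div_le_iff₀ hh, div_le_iff₀ hh, mul_assoc,
    mul_comm S.mass]
  exact ⟨S.point_zero ▸ hS.1, hS.2 1 (by norm_num), hS.2 (-1) (by norm_num)⟩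

variable (D l) in
lemma exists_abs_ddq_H₁_comp_le : ∃ C, 0 ≤ C ∧ ∀ S : D.Segment l,
    |ddq l S.h (fun y => D.H₁ (y, S.u y)) S.x| ≤ C * S.mass := by
  obtain ⟨C, hC, hincr⟩ := hasIncrementBound_pd_H₁_comp (D := D) (l := l)
  refine ⟨C, hC, fun S => ?_⟩
  have hderiv (s : ℝ) (hs : s ∈ Icc (-1 : ℝ) 1) :=
    S.hasDerivAt_comp_point (differentiableAt_of_contDiffOn D.isOpen_Ω
      (contDiffOn_H₁_comp S.adm.contDiffOn) one_ne_zero (S.point_mem_Ω hs))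
  have hsecond := abs_second_diff_le (E := |S.h| * (C * (|S.h| * S.mass))) hderiv fun s hs => by
    have hs' : -s ∈ Icc (-1 : ℝ) 1 := ⟨neg_le_neg hs.2, neg_le.1 hs.1⟩
    rw [pd_H₁_comp S.adm.contDiffOn (S.point_mem_Ω hs),
      pd_H₁_comp S.adm.contDiffOn (S.point_mem_Ω hs'), ← mul_sub, abs_mul]
    exact mul_le_mul_of_nonneg_left ((hincr S (-s) hs').2 s hs) (abs_nonneg _)
  rw [S.ddq_eq, abs_div, abs_pow, div_le_iff₀ (pow_pos (abs_pos.2 S.h_ne_zero) 2)]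
  linarith

variable (D l) in
theorem exists_le_ddq_φ : ∃ C, 0 ≤ C ∧ ∀ S : D.Segment l,
    -(C * S.mass) ≤ ddq l S.h (D.φ S.u) S.x -
      2 * D.H₁ (S.x, S.u S.x) * ∑ i, pd i S.u S.x * ddq l S.h (pd i S.u) S.x := by
  obtain ⟨A, hA, hddq⟩ := D.exists_abs_ddq_H₁_comp_le l
  obtain ⟨L, _, hdq⟩ := isLipschitzCoeff_H₁_comp (D := D).exists_abs_dq_le (l := l)
  obtain ⟨P, hP, hp⟩ :=
    IsFirstOrder.normSq_grad (D := D).hasIncrementBound.exists_abs_dq_le (l := l)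
  refine ⟨P * A + 2 * (L * P), by positivity, fun S => ?_⟩
  obtain ⟨hp₀, hp₁, hp₂⟩ := hp S
  obtain ⟨hL₁, hL₂⟩ := hdq S
  have hH : 0 ≤ D.H₁ (S.x, S.u S.x) := D.H₁_nonneg _ ⟨S.x_mem_Ω, mem_univ _⟩
  have hsquare := mul_le_mul_of_nonneg_left
    (two_mul_sum_mul_ddq_le_ddq_normSq_grad (u := S.u) (x := S.x) (l := l) (h := S.h)) hH
  have hmul {a b A B : ℝ} (ha : |a| ≤ A) (hb : |b| ≤ B) : -(A * B) ≤ a * b :=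
    neg_le_of_abs_le ((abs_mul a b).trans_le
      (mul_le_mul ha hb (abs_nonneg _) ((abs_nonneg _).trans ha)))
  unfold φ
  rw [ddq_mul]
  linarith [hmul hp₀ (hddq S), hmul hL₁ hp₁, hmul hL₂ hp₂]

end HasIncrementBound

/-! ### The test quantity `ṽ` and the pointwise estimate -/

section SecondDifferenceCalculus
variable {l : Fin n} {h : ℝ} {w : (Fin n → ℝ) → ℝ} {O U : Set (Fin n → ℝ)}

lemma contDiffOn_ddq {m : WithTop ℕ∞} (hw : ContDiffOn ℝ m w U)
    (hO : ∀ x ∈ O, ∀ s ∈ Icc (-1 : ℝ) 1, x + (s * h) • (Pi.single l 1 : Fin n → ℝ) ∈ U) :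
    ContDiffOn ℝ m (ddq l h w) O := by
  have hmove (s : ℝ) (hs : s ∈ Icc (-1 : ℝ) 1) :
      ContDiffOn ℝ m (fun y => w (y + (s * h) • (Pi.single l 1 : Fin n → ℝ))) O :=
    hw.comp (by fun_prop) fun x hx => hO x hx s hs
  have hplus := hmove 1 (by norm_num)
  have hzero := hmove 0 (by norm_num)
  have hminus := hmove (-1) (by norm_num)
  simp only [one_mul, zero_mul, zero_smul, add_zero, neg_mul, neg_smul, ← sub_eq_add_neg]
    at hplus hzero hminus
  exact ((hplus.sub (contDiffOn_const.mul hzero)).add hminus).div_const _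

lemma pd_ddq (hU : IsOpen U) (hw : ContDiffOn ℝ 1 w U)
    (hx : ∀ s ∈ Icc (-1 : ℝ) 1, x + (s * h) • (Pi.single l 1 : Fin n → ℝ) ∈ U) (j : Fin n) :
    pd j (ddq l h w) x = ddq l h (pd j w) x := by
  have hmove (s : ℝ) (hs : s ∈ Icc (-1 : ℝ) 1) : HasFDerivAt
      (fun y => w (y + (s * h) • (Pi.single l 1 : Fin n → ℝ)))
      (fderiv ℝ w (x + (s * h) • (Pi.single l 1 : Fin n → ℝ))) x :=
    (hasFDerivAt_comp_add_right _).2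
      (differentiableAt_of_contDiffOn hU hw one_ne_zero (hx s hs)).hasFDerivAt
  have hplus := hmove 1 (by norm_num)
  have hzero := hmove 0 (by norm_num)
  have hminus := hmove (-1) (by norm_num)
  simp only [one_mul, zero_mul, zero_smul, add_zero, neg_mul, neg_smul, ← sub_eq_add_neg]
    at hplus hzero hminus
  have hsum := ((hplus.fun_sub (hzero.const_mul 2)).fun_add hminus).mul_const (h ^ 2)⁻¹
  simp only [← div_eq_mul_inv] at hsum
  have hddq : HasFDerivAt (ddq l h w) _ x := hsum
  rw [pd, hddq.fderiv]
  simp [ddq, pd, div_eq_inv_mul, mul_add]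

end SecondDifferenceCalculus

/-- The data over which the constant of the estimate must be uniform. -/
structure Trial (D : CancellationSetting n) where
  u : (Fin n → ℝ) → ℝ
  C₁ : ℝ
  q : ℝ
  ρ : ℝ
  h : ℝ
  η : (Fin n → ℝ) → ℝ
  adm : D.IsAdmissible u C₁
  cutoff : D.IsCutoff ρ η
  one_lt_q : 1 < q
  h_ne_zero : h ≠ 0
  abs_h_lt : |h| < ρ

namespace Trial
variable (P : D.Trial)

/-- The test quantity `ṽ = v_h + C₁`. -/
noncomputable def v (x : Fin n → ℝ) : ℝ :=
  (∑ l, ddq l P.h P.u x) + P.C₁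

/-- The positive part `ṽ⁺`. -/
noncomputable def vPos (x : Fin n → ℝ) : ℝ :=
  max (P.v x) 0

/-- A function with gradient `(ṽ⁺)^(q-1) ∇ṽ`. -/
noncomputable def potential (x : Fin n → ℝ) : ℝ :=
  posPartPowPrimitive P.q (P.v x)

/-- The exponent `q + k - 1`. -/
def exponent : ℝ :=
  P.q + (D.κ + 1 : ℕ)

/-- An open set on which all translates of `u` by at most `|h|` are smooth. -/
def domain : Set (Fin n → ℝ) :=
  ball D.x₀ (2 * D.R - |P.h|)

lemma exponent_nonneg : 0 ≤ P.exponent :=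
  add_nonneg (by linarith [P.one_lt_q]) (Nat.cast_nonneg _)

lemma vPos_nonneg (x : Fin n → ℝ) : 0 ≤ P.vPos x :=
  le_max_right _ _

lemma isOpen_domain : IsOpen P.domain :=
  isOpen_ball

lemma cutoffBall_subset_domain : D.cutoffBall P.ρ ⊆ P.domain :=
  closedBall_subset_ball (by linarith [P.abs_h_lt, P.cutoff.ρ_le, D.R_pos])

lemma add_smul_mem_ball (l : Fin n) (hx : x ∈ P.domain) {s : ℝ} (hs : s ∈ Icc (-1 : ℝ) 1) :
    x + (s * P.h) • (Pi.single l 1 : Fin n → ℝ) ∈ ball D.x₀ (2 * D.R) := by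
  have hmem := add_smul_mem_closedBall (h := P.h) (e := (Pi.single l 1 : Fin n → ℝ))
    (by simp [Pi.norm_single]) hs (mem_closedBall.2 le_rfl : x ∈ closedBall D.x₀ (dist x D.x₀))
  exact closedBall_subset_ball (by linarith [mem_ball.1 hx]) hmem

/-- The segment `[x - he_l, x + he_l]` around a point of the domain. -/
def segment (hx : x ∈ P.domain) (l : Fin n) : D.Segment l where
  u := P.u
  C₁ := P.C₁
  x := x
  h := P.h
  h_ne_zero := P.h_ne_zero
  adm := P.adm
  mem _ := P.add_smul_mem_ball l hx

lemma contDiffOn_ball : ContDiffOn ℝ 3 P.u (ball D.x₀ (2 * D.R)) :=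
  P.adm.contDiffOn.mono fun _ => mem_Ω

lemma contDiffOn_v : ContDiffOn ℝ 1 P.v P.domain :=
  (ContDiffOn.sum fun l _ => contDiffOn_ddq (P.contDiffOn_ball.of_le (by norm_num))
    fun _ hx _ => P.add_smul_mem_ball l hx).add contDiffOn_const

lemma pd_v (hx : x ∈ P.domain) (j : Fin n) : pd j P.v x = ∑ l, ddq l P.h (pd j P.u) x := by
  have hu : ContDiffOn ℝ 1 P.u (ball D.x₀ (2 * D.R)) := P.contDiffOn_ball.of_le (by norm_num)
  have hddq (l : Fin n) : DifferentiableAt ℝ (ddq l P.h P.u) x :=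
    differentiableAt_of_contDiffOn P.isOpen_domain
      (contDiffOn_ddq hu fun _ hx _ => P.add_smul_mem_ball l hx) one_ne_zero hx
  calc pd j P.v x = pd j (fun y => ∑ l, ddq l P.h P.u y) x := by
        rw [pd, pd, show P.v = fun y => (∑ l, ddq l P.h P.u y) + P.C₁ from rfl, fderiv_add_const]
    _ = ∑ l, pd j (ddq l P.h P.u) x := pd_sum fun l _ => hddq l
    _ = _ := Finset.sum_congr rfl fun l _ =>
        pd_ddq isOpen_ball hu (fun _ => P.add_smul_mem_ball l hx) j

lemma contDiffOn_potential : ContDiffOn ℝ 1 P.potential P.domain :=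
  (contDiff_posPartPowPrimitive P.one_lt_q.le).comp_contDiffOn P.contDiffOn_v

lemma pd_potential (hx : x ∈ P.domain) (j : Fin n) :
    pd j P.potential x = P.vPos x ^ (P.q - 1) * pd j P.v x := by
  have hv := (differentiableAt_of_contDiffOn P.isOpen_domain P.contDiffOn_v one_ne_zero
    hx).hasFDerivAt
  have hcomp : HasFDerivAt P.potential (P.vPos x ^ (P.q - 1) • fderiv ℝ P.v x) x :=
    (hasDerivAt_posPartPowPrimitive P.one_lt_q.le (P.v x)).comp_hasFDerivAt x hv
  rw [pd, hcomp.fderiv]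
  rfl

/-- The integrand containing the divergence of `F[u]`. -/
noncomputable def divTerm (x : Fin n → ℝ) : ℝ :=
  P.η x * P.vPos x ^ (P.q - 1) *
    ∑ j, (∑ i, pd i (fun y => D.T (D.κ + 1) P.u y i j) x) * pd j P.v x

/-- The integrand containing `Δ_{ll}^h` of `H[u]`. -/
noncomputable def diffTerm (l : Fin n) (x : Fin n → ℝ) : ℝ :=
  P.η x * P.vPos x ^ (P.q - 1) * ∑ i, ∑ j, D.T (D.κ + 1) P.u x i j *
    ddq l P.h (fun y => (D.φ P.u y • (1 : Matrix (Fin n) (Fin n) ℝ)) i j) x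

/-- What is left of `Δ_{ll}^h (H₁|∇u|²)` after cancellation of its third-order part. -/
noncomputable def excess (l : Fin n) (x : Fin n → ℝ) : ℝ :=
  ddq l P.h (D.φ P.u) x - 2 * D.H₁ (x, P.u x) * ∑ i, pd i P.u x * ddq l P.h (pd i P.u) x

lemma sum_T_mul_ddq (l : Fin n) (x : Fin n → ℝ) :
    ∑ i, ∑ j, D.T (D.κ + 1) P.u x i j *
      ddq l P.h (fun y => (D.φ P.u y • (1 : Matrix (Fin n) (Fin n) ℝ)) i j) x =
      ((n : ℝ) - (D.κ + 1)) * D.σ (D.κ + 1) P.u x * ddq l P.h (D.φ P.u) x := by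
  have htrace := trace_newtonT (augHess P.u (D.φ P.u) x)
    (show D.κ + 1 ≤ n by linarith [D.κ_add_two_le])
  push_cast at htrace
  rw [σ, ← htrace, ← T, trace, Finset.sum_mul]
  refine Finset.sum_congr rfl fun i _ => ?_
  simp only [Matrix.smul_apply, smul_eq_mul, ddq_mul_const]
  simp [Matrix.one_apply]

lemma divTerm_add_sum_diffTerm (hx : x ∈ P.domain) (hxΩ : x ∈ D.Ω) :
    P.divTerm x + ∑ l, P.diffTerm l x = ((n : ℝ) - (D.κ + 1)) *
      (P.η x * ∑ j, D.flux P.u j x * pd j P.potential x +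
        P.η x * P.vPos x ^ (P.q - 1) * (D.σ (D.κ + 1) P.u x * ∑ l, P.excess l x)) := by
  have hcross : ∑ j, pd j P.u x * pd j P.v x = ∑ l, ∑ i, pd i P.u x * ddq l P.h (pd i P.u) x := by
    simp only [P.pd_v hx, Finset.mul_sum]
    exact Finset.sum_comm
  have hdiv : ∑ j, ((n : ℝ) - (D.κ + 1)) * (D.flux P.u j x -
        2 * D.H₁ (x, P.u x) * D.σ (D.κ + 1) P.u x * pd j P.u x) * pd j P.v x =
      ((n : ℝ) - (D.κ + 1)) * (∑ j, D.flux P.u j x * pd j P.v x -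
        2 * D.H₁ (x, P.u x) * D.σ (D.κ + 1) P.u x * ∑ j, pd j P.u x * pd j P.v x) := by
    simp only [Finset.mul_sum, ← Finset.sum_sub_distrib]
    exact Finset.sum_congr rfl fun j _ => by ring
  simp only [divTerm, diffTerm, excess, sum_T_mul_ddq, sum_pd_T_eq_flux P.adm.contDiffOn hxΩ,
    P.pd_potential hx, hdiv, hcross, mul_left_comm _ (P.vPos x ^ (P.q - 1)), ← Finset.mul_sum,
    Finset.sum_sub_distrib]
  ring

end Trial

/-! ### Integration -/

variable (D) in
lemma sub_order_nonneg : 0 ≤ (n : ℝ) - (D.κ + 1) := by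
  have hκ : ((D.κ + 2 : ℕ) : ℝ) ≤ n := Nat.cast_le.2 D.κ_add_two_le
  push_cast at hκ
  linarith

lemma Segment.rpow_mul_pow_mul_mass_le {l : Fin n} (S : D.Segment l) {a q : ℝ} (ha : 0 ≤ a)
    (hq : 1 ≤ q) (N : ℕ) :
    a ^ (q - 1) * weight S.u S.C₁ S.x ^ N * S.mass ≤
      2 * (a ^ (q + N) + weight S.u S.C₁ S.x ^ (q + N)) +
        ∫ s in (-1 : ℝ)..1, weight S.u S.C₁ (S.point s) ^ (q + N) := by
  have hcont := S.continuousOn_comp_point (continuousOn_weight (C₁ := S.C₁) S.adm.contDiffOn)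
  have hrpow : IntervalIntegrable (fun s => weight S.u S.C₁ (S.point s) ^ (q + N)) volume (-1) 1 :=
    (hcont.rpow_const fun _ _ => Or.inr (by positivity)).intervalIntegrable_of_Icc (by norm_num)
  have hw : 0 ≤ weight S.u S.C₁ S.x :=
    zero_le_one.trans (S.point_zero ▸ S.one_le_weight (s := 0) (by norm_num))
  calc a ^ (q - 1) * weight S.u S.C₁ S.x ^ N * S.mass
      = ∫ s in (-1 : ℝ)..1,
          a ^ (q - 1) * weight S.u S.C₁ S.x ^ N * weight S.u S.C₁ (S.point s) :=
        (intervalIntegral.integral_const_mul _ _).symm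
    _ ≤ ∫ s in (-1 : ℝ)..1, (a ^ (q + N) + weight S.u S.C₁ S.x ^ (q + N) +
          weight S.u S.C₁ (S.point s) ^ (q + N)) :=
        intervalIntegral.integral_mono_on (by norm_num) (S.intervalIntegrable_weight.const_mul _)
          (intervalIntegrable_const.add hrpow) fun _ hs =>
            rpow_mul_pow_mul_le_add ha hw (zero_le_one.trans (S.one_le_weight hs)) hq N
    _ = _ := by
        rw [intervalIntegral.integral_add intervalIntegrable_const hrpow,
          intervalIntegral.integral_const, smul_eq_mul]
        norm_num

namespace Trial
variable (P : D.Trial)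

/-- The integrand that absorbs the errors in the direction `l`, after Young's inequality. -/
noncomputable def majorant (l : Fin n) (x : Fin n → ℝ) : ℝ :=
  2 * (P.vPos x ^ P.exponent + weight P.u P.C₁ x ^ P.exponent) +
    ∫ s in (-1 : ℝ)..1, weight P.u P.C₁ (x + (s * P.h) • (Pi.single l 1 : Fin n → ℝ)) ^ P.exponent

/-- The bracket on the right-hand side of the estimate. -/
noncomputable def energy : ℝ :=
  (∫ x in D.cutoffBall P.ρ, P.vPos x ^ P.exponent) +
    ∫ x in ball D.x₀ (D.R + 3 * P.ρ), weight P.u P.C₁ x ^ P.exponent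

variable (D) in
lemma exists_le_mul_σ_mul_excess (l : Fin n) : ∃ C, 0 ≤ C ∧ ∀ P : D.Trial,
    ∀ x ∈ D.cutoffBall P.ρ, -(C * P.majorant l x) ≤
      P.η x * P.vPos x ^ (P.q - 1) * (D.σ (D.κ + 1) P.u x * P.excess l x) := by
  obtain ⟨A, hA, hexcess⟩ := D.exists_le_ddq_φ l
  obtain ⟨B, hB, hσ⟩ := (isOrder_σ (D := D) (m := D.κ + 1)
    (by linarith [D.κ_add_two_le])).exists_abs_le
  refine ⟨A * B, by positivity, fun P x hx => ?_⟩
  set S := P.segment (P.cutoffBall_subset_domain hx) l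
  have hxball := P.cutoff.cutoffBall_subset hx
  have : 0 ≤ weight P.u P.C₁ x := zero_le_one.trans (P.adm.one_le_weight x hxball)
  have hmass : 0 ≤ S.mass := zero_le_one.trans S.one_le_mass
  have hv := Real.rpow_nonneg (P.vPos_nonneg x) (P.q - 1)
  have hη := P.cutoff.nonneg x
  have hσ₀ := P.adm.σ_nonneg x hxball
  have hσB : D.σ (D.κ + 1) P.u x ≤ B * weight P.u P.C₁ x ^ (D.κ + 1) :=
    (le_abs_self _).trans (hσ ⟨P.u, P.C₁, x, P.adm, hxball⟩)
  rw [neg_le]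
  calc -(P.η x * P.vPos x ^ (P.q - 1) * (D.σ (D.κ + 1) P.u x * P.excess l x))
      = P.η x * P.vPos x ^ (P.q - 1) * (D.σ (D.κ + 1) P.u x * -P.excess l x) := by ring
    _ ≤ P.η x * P.vPos x ^ (P.q - 1) * (D.σ (D.κ + 1) P.u x * (A * S.mass)) := by
        gcongr
        exact neg_le.1 (hexcess S)
    _ ≤ 1 * P.vPos x ^ (P.q - 1) * (B * weight P.u P.C₁ x ^ (D.κ + 1) * (A * S.mass)) := by
        gcongr
        exact P.cutoff.le_one x
    _ = A * B * (P.vPos x ^ (P.q - 1) * weight P.u P.C₁ x ^ (D.κ + 1) * S.mass) := by ring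
    _ ≤ A * B * P.majorant l x := mul_le_mul_of_nonneg_left
        (S.rpow_mul_pow_mul_mass_le (P.vPos_nonneg x) P.one_lt_q.le (D.κ + 1)) (by positivity)

section Continuity

lemma continuousOn_vPos_rpow {p : ℝ} (hp : 0 ≤ p) :
    ContinuousOn (fun x => P.vPos x ^ p) (D.cutoffBall P.ρ) :=
  (continuous_posPart_rpow hp).comp_continuousOn
    (P.contDiffOn_v.continuousOn.mono P.cutoffBall_subset_domain)

lemma continuousOn_weight_rpow :
    ContinuousOn (fun x => weight P.u P.C₁ x ^ P.exponent) D.Ω :=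
  (continuousOn_weight P.adm.contDiffOn).rpow_const fun _ _ => Or.inr P.exponent_nonneg

lemma continuousOn_η_mul_vPos_rpow :
    ContinuousOn (fun x => P.η x * P.vPos x ^ (P.q - 1)) (D.cutoffBall P.ρ) :=
  P.cutoff.contDiff.continuous.continuousOn.mul
    (P.continuousOn_vPos_rpow (sub_nonneg.2 P.one_lt_q.le))

lemma continuousOn_pd {w : (Fin n → ℝ) → ℝ} (hw : ContDiffOn ℝ 1 w P.domain) (j : Fin n) :
    ContinuousOn (pd j w) (D.cutoffBall P.ρ) :=
  (contDiffOn_pd (a := 0) P.isOpen_domain hw (by norm_num) j).continuousOn.mono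
    P.cutoffBall_subset_domain

lemma continuousOn_divTerm : ContinuousOn P.divTerm (D.cutoffBall P.ρ) :=
  P.continuousOn_η_mul_vPos_rpow.mul <| continuousOn_finsetSum _ fun j _ =>
    (continuousOn_finsetSum _ fun i _ => (contDiffOn_pd (a := 0) D.isOpen_Ω
      (contDiffOn_T (D.κ + 1) P.adm.contDiffOn i j) (by norm_num) i).continuousOn.mono
        P.cutoff.cutoffBall_subset_Ω).mul (P.continuousOn_pd P.contDiffOn_v j)

lemma continuousOn_diffTerm (l : Fin n) : ContinuousOn (P.diffTerm l) (D.cutoffBall P.ρ) := by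
  have hT (i j : Fin n) : ContinuousOn (fun x => D.T (D.κ + 1) P.u x i j) (D.cutoffBall P.ρ) :=
    (contDiffOn_T _ P.adm.contDiffOn i j).continuousOn.mono P.cutoff.cutoffBall_subset_Ω
  have hφ (i j : Fin n) : ContinuousOn
      (ddq l P.h fun y => (D.φ P.u y • (1 : Matrix (Fin n) (Fin n) ℝ)) i j) (D.cutoffBall P.ρ) :=
    (contDiffOn_ddq ((contDiffOn_φ P.adm.contDiffOn).mul contDiffOn_const) fun x hx s hs =>
      mem_Ω (P.add_smul_mem_ball l (P.cutoffBall_subset_domain hx) hs)).continuousOn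
  exact P.continuousOn_η_mul_vPos_rpow.mul <| continuousOn_finsetSum _ fun i _ =>
    continuousOn_finsetSum _ fun j _ => (hT i j).mul (hφ i j)

lemma continuousOn_fluxTerm :
    ContinuousOn (fun x => P.η x * ∑ j, D.flux P.u j x * pd j P.potential x)
      (D.cutoffBall P.ρ) :=
  P.cutoff.contDiff.continuous.continuousOn.mul <| continuousOn_finsetSum _ fun j _ =>
    ((hasFluxBound_flux.continuousOn P.u P.C₁ P.adm j).mono P.cutoff.cutoffBall_subset).mul
      (P.continuousOn_pd P.contDiffOn_potential j)

end Continuity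

section Energy

lemma weight_rpow_nonneg (hx : x ∈ ball D.x₀ (2 * D.R)) : 0 ≤ weight P.u P.C₁ x ^ P.exponent :=
  Real.rpow_nonneg (zero_le_one.trans (P.adm.one_le_weight x hx)) _

lemma outerBall_subset : ball D.x₀ (D.R + 3 * P.ρ) ⊆ ball D.x₀ (2 * D.R) :=
  ball_subset_ball (by linarith [P.cutoff.ρ_le])

lemma setIntegral_weight_rpow_le {A : Set (Fin n → ℝ)} (hA : A ⊆ ball D.x₀ (D.R + 3 * P.ρ)) :
    ∫ x in A, weight P.u P.C₁ x ^ P.exponent ≤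
      ∫ x in ball D.x₀ (D.R + 3 * P.ρ), weight P.u P.C₁ x ^ P.exponent :=
  setIntegral_mono_set
    (((P.continuousOn_weight_rpow.mono D.closedBall_subset).integrableOn_compact
      (isCompact_closedBall _ _)).mono_set (P.outerBall_subset.trans ball_subset_closedBall))
    ((ae_restrict_mem measurableSet_ball).mono fun _ hx =>
      P.weight_rpow_nonneg (P.outerBall_subset hx))
    (Eventually.of_forall hA)

lemma cutoffBall_subset_outerBall : D.cutoffBall P.ρ ⊆ ball D.x₀ (D.R + 3 * P.ρ) :=
  closedBall_subset_ball (by linarith [P.cutoff.ρ_pos])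

lemma translatedBall_subset_outerBall :
    closedBall D.x₀ (D.R + 2 * P.ρ + |P.h|) ⊆ ball D.x₀ (D.R + 3 * P.ρ) :=
  closedBall_subset_ball (by linarith [P.abs_h_lt])

lemma continuousOn_weight_rpow_translatedBall :
    ContinuousOn (fun x => weight P.u P.C₁ x ^ P.exponent)
      (closedBall D.x₀ (D.R + 2 * P.ρ + |P.h|)) :=
  P.continuousOn_weight_rpow.mono fun _ hx =>
    mem_Ω (P.outerBall_subset (P.translatedBall_subset_outerBall hx))

lemma setIntegral_vPos_rpow_nonneg : 0 ≤ ∫ x in D.cutoffBall P.ρ, P.vPos x ^ P.exponent :=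
  integral_nonneg fun x => Real.rpow_nonneg (P.vPos_nonneg x) _

lemma setIntegral_weight_rpow_nonneg :
    0 ≤ ∫ x in ball D.x₀ (D.R + 3 * P.ρ), weight P.u P.C₁ x ^ P.exponent :=
  setIntegral_nonneg measurableSet_ball fun _ hx => P.weight_rpow_nonneg (P.outerBall_subset hx)

lemma energy_nonneg : 0 ≤ P.energy :=
  add_nonneg P.setIntegral_vPos_rpow_nonneg P.setIntegral_weight_rpow_nonneg

lemma integrableOn_vPos_rpow :
    IntegrableOn (fun x => P.vPos x ^ P.exponent) (D.cutoffBall P.ρ) :=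
  (P.continuousOn_vPos_rpow P.exponent_nonneg).integrableOn_compact isCompact_cutoffBall

lemma integrableOn_weight_rpow :
    IntegrableOn (fun x => weight P.u P.C₁ x ^ P.exponent) (D.cutoffBall P.ρ) :=
  (P.continuousOn_weight_rpow.mono P.cutoff.cutoffBall_subset_Ω).integrableOn_compact
    isCompact_cutoffBall

lemma integrableOn_majorant (l : Fin n) : IntegrableOn (P.majorant l) (D.cutoffBall P.ρ) :=
  ((P.integrableOn_vPos_rpow.add P.integrableOn_weight_rpow).const_mul 2).add
    (integrableOn_integral_comp_add_smul (by simp [Pi.norm_single])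
      P.continuousOn_weight_rpow_translatedBall)

lemma setIntegral_majorant_le (l : Fin n) :
    ∫ x in D.cutoffBall P.ρ, P.majorant l x ≤ 4 * P.energy := by
  have hsegment : ∫ x in D.cutoffBall P.ρ, (∫ s in (-1 : ℝ)..1,
      weight P.u P.C₁ (x + (s * P.h) • (Pi.single l 1 : Fin n → ℝ)) ^ P.exponent) ≤ _ :=
    setIntegral_integral_comp_add_smul_le (by simp [Pi.norm_single])
      P.continuousOn_weight_rpow_translatedBall fun y hy =>
        P.weight_rpow_nonneg (P.outerBall_subset (P.translatedBall_subset_outerBall hy))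
  have houter := P.setIntegral_weight_rpow_le P.translatedBall_subset_outerBall
  have hinner := P.setIntegral_weight_rpow_le P.cutoffBall_subset_outerBall
  unfold majorant energy
  rw [integral_add ((P.integrableOn_vPos_rpow.fun_add P.integrableOn_weight_rpow).const_mul 2)
    (integrableOn_integral_comp_add_smul (by simp [Pi.norm_single])
      P.continuousOn_weight_rpow_translatedBall), integral_const_mul,
    integral_add P.integrableOn_vPos_rpow P.integrableOn_weight_rpow]
  linarith [P.setIntegral_vPos_rpow_nonneg]

lemma setIntegral_abs_potential_mul_weight_pow_le :
    ∫ x in D.cutoffBall P.ρ, |P.potential x| * weight P.u P.C₁ x ^ (D.κ + 1) ≤ 2 * P.energy := by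
  have hyoung : ∀ x ∈ D.cutoffBall P.ρ, |P.potential x| * weight P.u P.C₁ x ^ (D.κ + 1) ≤
      2 * P.vPos x ^ P.exponent + weight P.u P.C₁ x ^ P.exponent := fun x hx => by
    have hw := zero_le_one.trans (P.adm.one_le_weight x (P.cutoff.cutoffBall_subset hx))
    calc |P.potential x| * weight P.u P.C₁ x ^ (D.κ + 1)
        ≤ P.vPos x ^ (P.q - 1) * P.vPos x * weight P.u P.C₁ x ^ (D.κ + 1) :=
          mul_le_mul_of_nonneg_right (abs_posPartPowPrimitive_le P.one_lt_q _) (by positivity)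
      _ = P.vPos x ^ (P.q - 1) * weight P.u P.C₁ x ^ (D.κ + 1) * P.vPos x := by ring
      _ ≤ P.vPos x ^ P.exponent + weight P.u P.C₁ x ^ P.exponent + P.vPos x ^ P.exponent :=
          rpow_mul_pow_mul_le_add (P.vPos_nonneg x) hw (P.vPos_nonneg x) P.one_lt_q.le _
      _ = _ := by ring
  have hcont : ContinuousOn (fun x => |P.potential x| * weight P.u P.C₁ x ^ (D.κ + 1))
      (D.cutoffBall P.ρ) :=
    (P.contDiffOn_potential.continuousOn.mono P.cutoffBall_subset_domain).abs.mul
      (((continuousOn_weight P.adm.contDiffOn).mono P.cutoff.cutoffBall_subset_Ω).pow _)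
  have hmono := setIntegral_mono_on (hcont.integrableOn_compact isCompact_cutoffBall)
    ((P.integrableOn_vPos_rpow.const_mul 2).fun_add P.integrableOn_weight_rpow)
    isCompact_cutoffBall.measurableSet hyoung
  rw [integral_add (P.integrableOn_vPos_rpow.const_mul 2) P.integrableOn_weight_rpow,
    integral_const_mul] at hmono
  have hinner := P.setIntegral_weight_rpow_le P.cutoffBall_subset_outerBall
  unfold energy
  linarith [P.setIntegral_weight_rpow_nonneg]

end Energy

variable (D) in
lemma exists_abs_setIntegral_fluxTerm_le : ∃ C, ∀ P : D.Trial,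
    |∫ x in D.cutoffBall P.ρ, P.η x * ∑ j, D.flux P.u j x * pd j P.potential x| ≤
      C / P.ρ * P.energy := by
  obtain ⟨C, hC, hflux⟩ := (hasFluxBound_flux (D := D)).exists_le
  refine ⟨C * 2, fun P => ?_⟩
  have hρ := P.cutoff.ρ_pos
  calc _ ≤ C / P.ρ * ∫ x in D.cutoffBall P.ρ, |P.potential x| * weight P.u P.C₁ x ^ (D.κ + 1) :=
        hflux _ _ _ _ _ _ P.adm P.cutoff P.isOpen_domain P.cutoffBall_subset_domain
          P.contDiffOn_potential
    _ ≤ C / P.ρ * (2 * P.energy) :=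
        mul_le_mul_of_nonneg_left P.setIntegral_abs_potential_mul_weight_pow_le (by positivity)
    _ = _ := by ring

lemma le_setIntegral_divTerm_add_sum_diffTerm {A : Fin n → ℝ}
    (hA : ∀ l, ∀ x ∈ D.cutoffBall P.ρ, -(A l * P.majorant l x) ≤
      P.η x * P.vPos x ^ (P.q - 1) * (D.σ (D.κ + 1) P.u x * P.excess l x)) :
    ((n : ℝ) - (D.κ + 1)) * ((∫ x in D.cutoffBall P.ρ,
        P.η x * ∑ j, D.flux P.u j x * pd j P.potential x) -
        ∑ l, A l * ∫ x in D.cutoffBall P.ρ, P.majorant l x) ≤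
      (∫ x in D.cutoffBall P.ρ, P.divTerm x) +
        ∑ l, ∫ x in D.cutoffBall P.ρ, P.diffTerm l x := by
  have hdiv := P.continuousOn_divTerm.integrableOn_compact (μ := volume) isCompact_cutoffBall
  have hdiff (l : Fin n) := (P.continuousOn_diffTerm l).integrableOn_compact (μ := volume)
    isCompact_cutoffBall
  have hflux := P.continuousOn_fluxTerm.integrableOn_compact (μ := volume) isCompact_cutoffBall
  have hmajorant := integrable_finsetSum Finset.univ
    fun l _ => (P.integrableOn_majorant l).const_mul (A l)
  simp only [← integral_const_mul]
  rw [← integral_finsetSum _ fun l _ => hdiff l,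
    ← integral_finsetSum _ fun l _ => (P.integrableOn_majorant l).const_mul (A l),
    ← integral_sub hflux hmajorant, ← integral_const_mul,
    ← integral_add hdiv (integrable_finsetSum _ fun l _ => hdiff l)]
  refine setIntegral_mono_on ((hflux.sub hmajorant).const_mul _)
    (hdiv.add (integrable_finsetSum _ fun l _ => hdiff l))
    isCompact_cutoffBall.measurableSet fun x hx => ?_
  rw [P.divTerm_add_sum_diffTerm (P.cutoffBall_subset_domain hx) (P.cutoff.cutoffBall_subset_Ω hx)]
  refine mul_le_mul_of_nonneg_left ?_ D.sub_order_nonneg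
  rw [sub_eq_add_neg, ← Finset.sum_neg_distrib, Finset.mul_sum _ _ (D.σ _ _ _),
    Finset.mul_sum _ _ (_ * _ ^ _)]
  exact add_le_add le_rfl (Finset.sum_le_sum fun l _ => hA l x hx)

variable (D) in
theorem exists_le_setIntegral_divTerm_add_sum_diffTerm : ∃ C, ∀ P : D.Trial,
    -(C / P.ρ) * P.energy ≤
      (∫ x in D.cutoffBall P.ρ, P.divTerm x) +
        ∑ l, ∫ x in D.cutoffBall P.ρ, P.diffTerm l x := by
  obtain ⟨B, hflux⟩ := exists_abs_setIntegral_fluxTerm_le D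
  choose A hA hexcess using exists_le_mul_σ_mul_excess D
  refine ⟨((n : ℝ) - (D.κ + 1)) * (B + 4 * (∑ l, A l) * (D.R / 3)), fun P => ?_⟩
  refine le_trans ?_ (P.le_setIntegral_divTerm_add_sum_diffTerm fun l => hexcess l P)
  have hρ := P.cutoff.ρ_pos
  have henergy := P.energy_nonneg
  have hmajorant : ∑ l, A l * ∫ x in D.cutoffBall P.ρ, P.majorant l x ≤
      4 * (∑ l, A l) * P.energy := by
    rw [mul_right_comm, mul_comm, Finset.sum_mul]
    exact Finset.sum_le_sum fun l _ =>
      mul_le_mul_of_nonneg_left (P.setIntegral_majorant_le l) (hA l)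
  have hscale : 4 * (∑ l, A l) * P.energy ≤ 4 * (∑ l, A l) * (D.R / 3) / P.ρ * P.energy := by
    have hsum := Finset.sum_nonneg fun l (_ : l ∈ Finset.univ) => hA l
    gcongr
    rw [le_div_iff₀ hρ]
    exact mul_le_mul_of_nonneg_left P.cutoff.ρ_le (by positivity)
  calc _ = ((n : ℝ) - (D.κ + 1)) * (-(B / P.ρ * P.energy) -
        4 * (∑ l, A l) * (D.R / 3) / P.ρ * P.energy) := by ring
    _ ≤ _ := mul_le_mul_of_nonneg_left
        (sub_le_sub (neg_le_of_abs_le (hflux P)) (hmajorant.trans hscale)) D.sub_order_nonneg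

end Trial

lemma setIntegral_cutoffBall_eq {ρ : ℝ} (hρ : 0 < ρ) (w : (Fin n → ℝ) → ℝ) :
    ∫ x in D.cutoffBall ρ, w x = ∫ x in ball D.x₀ (D.R + 2 * ρ), w x := by
  have hsphere : volume (sphere D.x₀ (D.R + 2 * ρ)) = 0 :=
    Measure.addHaar_sphere_of_ne_zero _ _ (by linarith [D.R_pos])
  rw [cutoffBall, ← ball_union_sphere]
  exact setIntegral_congr_set (union_ae_eq_left_of_ae_eq_empty (ae_eq_empty.2 hsphere))

end CancellationSetting

theorem cancellation_higher_order_case1_general {n k : ℕ} (hk2 : 2 ≤ k) (hkn : k ≤ n)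
    {Ω : Set (Fin n → ℝ)} (hΩ : IsOpen Ω) {H₁ : (Fin n → ℝ) × ℝ → ℝ}
    (hH₁nonneg : ∀ y ∈ Ω ×ˢ (univ : Set ℝ), 0 ≤ H₁ y) (hH₁ : C11On H₁ (Ω ×ˢ (univ : Set ℝ)))
    {x₀ : Fin n → ℝ} {R : ℝ} (hR : 0 < R) (hball : closedBall x₀ (2 * R) ⊆ Ω) (M Λ : ℝ)
    {c₀ : ℝ} (hc₀ : 0 ≤ c₀) :
    ∃ C : ℝ, ∀ (u : (Fin n → ℝ) → ℝ) (C₁ q ρ h : ℝ) (η : (Fin n → ℝ) → ℝ),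
      ContDiffOn ℝ 3 u Ω →
      (∀ x ∈ ball x₀ (2 * R),
        |esymmMat k (hess u x -
          (H₁ (x, u x) * normSq (grad u x)) • (1 : Matrix (Fin n) (Fin n) ℝ))| ≤ Λ ∧
        0 ≤ esymmMat (k - 1) (hess u x -
          (H₁ (x, u x) * normSq (grad u x)) • (1 : Matrix (Fin n) (Fin n) ℝ))) →
      (∀ x ∈ ball x₀ (2 * R), |u x| + vnorm (grad u x) ≤ M) →
      (∀ x ∈ ball x₀ (2 * R), 1 ≤ lapl u x + C₁ ∧ matNorm (hess u x) ≤ lapl u x + C₁) →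
      1 < q → 0 < ρ → ρ ≤ R / 3 → h ≠ 0 → |h| < ρ →
      ContDiff ℝ 1 η →
      (∀ x, x ∉ ball x₀ (R + 2 * ρ) → η x = 0) →
      (∀ x, 0 ≤ η x ∧ η x ≤ 1) →
      (∀ x, vnorm (grad η x) ≤ c₀ / ρ) →
      (∫ x in ball x₀ (R + 2 * ρ),
          η x * (max ((∑ l : Fin n, ddq l h u x) + C₁) 0) ^ (q - 1) *
            ∑ j, (∑ i, pd i (fun y => newtonT (k - 1) (hess u y -
                  (H₁ (y, u y) * normSq (grad u y)) • (1 : Matrix (Fin n) (Fin n) ℝ)) i j) x) *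
              pd j (fun y => (∑ l : Fin n, ddq l h u y) + C₁) x)
        + ∑ l : Fin n, ∫ x in ball x₀ (R + 2 * ρ),
            η x * (max ((∑ l' : Fin n, ddq l' h u x) + C₁) 0) ^ (q - 1) *
              ∑ i, ∑ j, newtonT (k - 1) (hess u x -
                  (H₁ (x, u x) * normSq (grad u x)) • (1 : Matrix (Fin n) (Fin n) ℝ)) i j *
                ddq l h (fun y =>
                  ((H₁ (y, u y) * normSq (grad u y)) • (1 : Matrix (Fin n) (Fin n) ℝ)) i j) x
      ≥ -(C / ρ) *
          ((∫ x in ball x₀ (R + 2 * ρ),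
              (max ((∑ l : Fin n, ddq l h u x) + C₁) 0) ^ (q + (k : ℝ) - 1))
            + ∫ x in ball x₀ (R + 3 * ρ), (lapl u x + C₁) ^ (q + (k : ℝ) - 1)) := by
  obtain ⟨κ, rfl⟩ := Nat.exists_eq_add_of_le' hk2
  let D : CancellationSetting n :=
    ⟨κ, Ω, H₁, x₀, R, M, Λ, c₀, hkn, hΩ, hH₁nonneg, hH₁, hR, hball, hc₀⟩
  obtain ⟨C, hC⟩ := CancellationSetting.Trial.exists_le_setIntegral_divTerm_add_sum_diffTerm D
  refine ⟨C, fun u C₁ q ρ h η hu hσ hM hweight hq hρ hρR hh hhρ hη hη₀ hη₁ hηgrad => ?_⟩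
  have hexponent : q + ((κ + 2 : ℕ) : ℝ) - 1 = q + (κ + 1 : ℕ) := by
    push_cast
    ring
  have hestimate := hC {
    u, C₁, q, ρ, h, η
    adm := ⟨hu, hM, fun x hx => (hweight x hx).1, fun x hx => (hweight x hx).2,
      fun x hx => (hσ x hx).2, fun x hx => (hσ x hx).1⟩
    cutoff := ⟨hρ, hρR, hη, hη₀, fun x => (hη₁ x).1, fun x => (hη₁ x).2, hηgrad⟩
    one_lt_q := hq
    h_ne_zero := hh
    abs_h_lt := hhρ }
  simp only [CancellationSetting.Trial.energy,
    CancellationSetting.setIntegral_cutoffBall_eq hρ] at hestimate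
  rw [hexponent]
  exact hestimate

/-- Cancellation of higher order terms, Case 1
(Corollary 4.7, estimate (AG), for classical solutions). -/
theorem cancellation_higher_order_case1
    {n : ℕ} (hn : 3 ≤ n) (k : ℕ) (hk2 : 2 ≤ k) (hkn : k ≤ n)
    (Ω : Set (Fin n → ℝ)) (hΩ : IsOpen Ω)
    (f : ((Fin n → ℝ) × ℝ × (Fin n → ℝ)) → ℝ)
    (hfpos : ∀ y ∈ Ω ×ˢ ((univ : Set ℝ) ×ˢ (univ : Set (Fin n → ℝ))), 0 < f y)
    (hf : C11On f (Ω ×ˢ ((univ : Set ℝ) ×ˢ (univ : Set (Fin n → ℝ)))))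
    (H₁ : ((Fin n → ℝ) × ℝ) → ℝ)
    (hH₁nonneg : ∀ y ∈ Ω ×ˢ (univ : Set ℝ), 0 ≤ H₁ y)
    (hH₁ : C11On H₁ (Ω ×ˢ (univ : Set ℝ)))
    (x₀ : Fin n → ℝ) (R : ℝ) (hR : 0 < R)
    (hball : closure (ball x₀ (2 * R)) ⊆ Ω)
    (M : ℝ) (hM : 0 < M) (c₀ : ℝ) (hc₀ : 0 < c₀) :
    ∃ C : ℝ, ∀ (u : (Fin n → ℝ) → ℝ) (C₁ q ρ h : ℝ) (η : (Fin n → ℝ) → ℝ),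
      ContDiffOn ℝ 3 u Ω →
      (∀ x ∈ Ω,
        esymmMat k (hess u x -
            (H₁ (x, u x) * normSq (grad u x)) • (1 : Matrix (Fin n) (Fin n) ℝ))
          = f (x, u x, grad u x) ^ k ∧
        GammaPlus k (hess u x -
            (H₁ (x, u x) * normSq (grad u x)) • (1 : Matrix (Fin n) (Fin n) ℝ))) →
      (∀ x ∈ ball x₀ (2 * R), |u x| + vnorm (grad u x) ≤ M) →
      0 ≤ C₁ → C₁ ≤ M →
      (∀ x ∈ ball x₀ (2 * R), 1 ≤ lapl u x + C₁ ∧ matNorm (hess u x) ≤ lapl u x + C₁) →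
      1 < q → 0 < ρ → ρ ≤ R / 3 → h ≠ 0 → |h| < ρ →
      ContDiff ℝ (⊤ : ℕ∞) η →
      (∀ x, x ∉ ball x₀ (R + 2 * ρ) → η x = 0) →
      (∀ x, 0 ≤ η x ∧ η x ≤ 1) →
      (∀ x ∈ ball x₀ (R + ρ), η x = 1) →
      (∀ x, vnorm (grad η x) ≤ c₀ / ρ) →
      (∀ x, matNorm (hess η x) ≤ c₀ / ρ ^ 2) →
      (∫ x in ball x₀ (R + 2 * ρ),
          η x * (max ((∑ l : Fin n, ddq l h u x) + C₁) 0) ^ (q - 1) *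
            ∑ j, (∑ i, pd i (fun y => newtonT (k - 1) (hess u y -
                  (H₁ (y, u y) * normSq (grad u y)) • (1 : Matrix (Fin n) (Fin n) ℝ)) i j) x) *
              pd j (fun y => (∑ l : Fin n, ddq l h u y) + C₁) x)
        + ∑ l : Fin n, ∫ x in ball x₀ (R + 2 * ρ),
            η x * (max ((∑ l' : Fin n, ddq l' h u x) + C₁) 0) ^ (q - 1) *
              ∑ i, ∑ j, newtonT (k - 1) (hess u x -
                  (H₁ (x, u x) * normSq (grad u x)) • (1 : Matrix (Fin n) (Fin n) ℝ)) i j *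
                ddq l h (fun y =>
                  ((H₁ (y, u y) * normSq (grad u y)) • (1 : Matrix (Fin n) (Fin n) ℝ)) i j) x
      ≥ -(C / ρ) *
          ((∫ x in ball x₀ (R + 2 * ρ),
              (max ((∑ l : Fin n, ddq l h u x) + C₁) 0) ^ (q + (k : ℝ) - 1))
            + ∫ x in ball x₀ (R + 3 * ρ), (lapl u x + C₁) ^ (q + (k : ℝ) - 1)) := by
  rw [closure_ball x₀ (by positivity : 2 * R ≠ 0)] at hball
  obtain ⟨Λ, hΛ⟩ := exists_forall_abs_le_of_isCompact (hf.1.continuousOn.pow k)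
    (isCompact_closedBall x₀ (2 * R)) hball M
  obtain ⟨C, hC⟩ := cancellation_higher_order_case1_general hk2 hkn hΩ hH₁nonneg hH₁ hR hball M Λ
    hc₀.le
  refine ⟨C, fun u C₁ q ρ h η hu hsol hbound _ _ hweight hq hρ hρR hh hhρ hη hη₀ hη₁ _ hηgrad _ =>
    hC u C₁ q ρ h η hu (fun x hx => ?_) hbound hweight hq hρ hρR hh hhρ (hη.of_le (by simp)) hη₀
      hη₁ hηgrad⟩
  have hx' : x ∈ closedBall x₀ (2 * R) := ball_subset_closedBall hx
  obtain ⟨heq, hcone⟩ := hsol x (hball hx')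
  exact ⟨heq ▸ hΛ x hx' _ _ (hbound x hx), (hcone (k - 1) (by omega) (by omega)).le⟩
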